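/- arXiv:2010.03055 — 2 statements merged into one kernel-verified Lean document; each statement's English description precedes it below -/
import Mathlib

section
/- Fix an integer k ≥ 2 and a positive real A, and set C_k = 128 if k = 2 and C_k = ∏_{p ≤ k^6, p prime} k if k ≥ 3, and δ_k = π² / (2^{2k+3} · C_k^{2k}). There exist C > 0 and X₀(A) such that the following holds for all X > X₀(A). Suppose α, β ∈ ℝ, q ∈ ℕ, a ∈ ℤ satisfy gcd(a,q) = 1, 1 < q ≤ (log X)^A, β = α − a/q, and |β| ≤ q^{−1} X^{−1} (log X)^A. Set ρ = e^{−1/X}. Then | Re( Φ(ρ e(α)) ) | ≤ (1 − δ_k/3) · Φ(ρ) · ( 1 + C · (log log X)/(log X) ). -/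
open Filter

noncomputable def eTheta (θ : ℝ) : ℂ := Complex.exp (2 * Real.pi * Complex.I * θ)

/-- `Φ(z) = ∑_{j≥1} ∑_p z^{j p^k}/j`. -/
noncomputable def PhiC (k : ℕ) (z : ℂ) : ℂ :=
  ∑' (j : ℕ+) (p : Nat.Primes), z ^ ((j : ℕ) * (p : ℕ) ^ k) / (j : ℂ)

/-- `Φ(ρ)` for real `ρ`. -/
noncomputable def PhiR (k : ℕ) (ρ : ℝ) : ℝ :=
  ∑' (j : ℕ+) (p : Nat.Primes), ρ ^ ((j : ℕ) * (p : ℕ) ^ k) / (j : ℝ)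

/-- `C_k = 128` for `k = 2`, and `C_k = ∏_{p ≤ k^6 prime} k` for `k ≥ 3`. -/
noncomputable def Ck (k : ℕ) : ℝ :=
  if k = 2 then 128 else ∏ _p ∈ (Finset.range (k ^ 6 + 1)).filter Nat.Prime, (k : ℝ)

/-- `δ_k = π² / (2^{2k+3} C_k^{2k})`. -/
noncomputable def deltak (k : ℕ) : ℝ := Real.pi ^ 2 / (2 ^ (2 * k + 3) * Ck k ^ (2 * k))

/-!
# Non-principal major arcs

Write `u_p = ρ ^ (p ^ k)` and `Y = X ^ (1/k)`. Since `Φ(ρ) - Re Φ(ρ e(α))` is a sum of nonnegative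
terms, it is at least the sum of `u_p (1 - cos 2π α p ^ k)` over any set of primes, and
`Φ(ρ) + Re Φ(ρ e(α))` is at least the sum of `u_p ^ 2 / 4`, because `u (1 + cos θ)` (from `j = 1`)
and `u ^ 2 (1 + cos 2θ) / 2` (from `j = 2`) cannot both be small. Chebyshev's upper bound gives
`Φ(ρ) ≤ K Y / log Y` with an explicit `K` (`phiR_le`), and his lower bound gives at least
`0.69 Y / log Y` primes up to `Y`, for all of which `u_p ≥ 1/e`. So it suffices that a positive
proportion of the primes `p ≤ Y` have `α p ^ k` at distance at least `η` from the integers, with `η`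
not too small in terms of `δ_k`; the numbers are compared in `deltak_mul_le`. The resulting bound is
`|Re Φ(ρ e(α))| ≤ (1 - δ_k/3) Φ(ρ)` for large `X`, with no error factor needed.

The primes with `α p ^ k` within `η = 1/(12 B)` of an integer, `B = badBound k`, are bounded from
above by `(13/50) Y / log R` plus a small error (`card_nearPrimes_le`). As `R` is nearly `Y ^ 0.45`,
this is about `0.58 Y / log Y`, which leaves more than `0.1 Y / log Y` good primes. The prime number
theorem in progressions is thus avoided; only an upper bound sieve is used:

* Selberg's sieve gives a Brun–Titchmarsh bound for primes in an interval and a residue class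
  (`brun_titchmarsh`).
* `[0, Y]` is cut at breakpoints between which `β p ^ k` is nearly constant. In each piece the near
  primes lie in the residue classes `r` mod `q` for which `a r ^ k / q + y` is near an integer.
* If `q > B`, at most `13/50` of the reduced classes have this property for any `y`: some unitary
  divisor of `q` is large compared with the kernel of `x ↦ x ^ k` on its unit group
  (`good_or_le_badBound`).
* If `1 < q ≤ B`, then `a r ^ k / q` is at distance at least `1/B` from the integers, so as `β t ^ k`
  grows the phase must travel `8/(9 B)` before it can spend `2/(9 B)` near an integer
  (`prefix_density`). The pieces have decreasing lengths, so Abel summation gives the same proportion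
  `13/50` (`weighted_near_le`).
-/

namespace MajorArc

/-! ### The Selberg denominator -/

/-- The squarefree `d ≤ R` coprime to `q`: the support of the Selberg weights. -/
def sieveSupport (q R : ℕ) : Finset ℕ :=
  (Finset.Icc 1 R).filter fun d => Squarefree d ∧ d.Coprime q

/-- The Selberg denominator `L = ∑ 1/φ(d)` over the support. -/
noncomputable def sieveSum (q R : ℕ) : ℝ :=
  ∑ d ∈ sieveSupport q R, (1 : ℝ) / (d.totient : ℝ)

lemma mem_sieveSupport {q R d : ℕ} :
    d ∈ sieveSupport q R ↔ (1 ≤ d ∧ d ≤ R) ∧ Squarefree d ∧ d.Coprime q := by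
  simp [sieveSupport]

lemma mem_sieveSupport_of_dvd {q R d n : ℕ} (hn : n ∈ sieveSupport q R) (hd : d ∣ n) :
    d ∈ sieveSupport q R := by
  rw [mem_sieveSupport] at hn ⊢
  have hpos : 0 < d := Nat.pos_of_dvd_of_pos hd (by omega)
  exact ⟨⟨hpos, (Nat.le_of_dvd (by omega) hd).trans hn.1.2⟩, hn.2.1.squarefree_of_dvd hd,
    hn.2.2.coprime_dvd_left hd⟩

lemma one_mem_sieveSupport {q R : ℕ} (hR : 1 ≤ R) : 1 ∈ sieveSupport q R := by
  rw [mem_sieveSupport]; exact ⟨⟨le_rfl, hR⟩, squarefree_one, Nat.coprime_one_left q⟩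

lemma sieveSum_pos {q R : ℕ} (hR : 1 ≤ R) : 0 < sieveSum q R := by
  refine Finset.sum_pos (fun d hd => ?_) ⟨1, one_mem_sieveSupport hR⟩
  have : 0 < d.totient := Nat.totient_pos.2 (by have := mem_sieveSupport.1 hd; omega)
  positivity

/-- The Euler product `∏_{p ∣ N} (1 - 1/p)⁻¹ = N/φ(N)`. -/
lemma sum_inv_factored (N : ℕ) (hN : N ≠ 0) :
    HasSum (fun m : Nat.factoredNumbers N.primeFactors => ((m : ℕ) : ℝ)⁻¹)
      ((N : ℝ) / N.totient) := by
  let f : ℕ →* ℝ :=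
    { toFun := fun n => (n : ℝ)⁻¹
      map_one' := by simp
      map_mul' := by intro x y; push_cast; rw [mul_inv] }
  have h := (EulerProduct.summable_and_hasSum_factoredNumbers_prod_filter_prime_geometric
    (f := f) (fun {p} hp => by
      have : (1 : ℝ) < p := by exact_mod_cast hp.one_lt
      simp only [f, MonoidHom.coe_mk, OneHom.coe_mk, norm_inv, Real.norm_natCast]
      exact inv_lt_one_of_one_lt₀ this) N.primeFactors).2
  have hfil : N.primeFactors.filter Nat.Prime = N.primeFactors := by
    apply Finset.filter_true_of_mem; intro p hp; exact Nat.prime_of_mem_primeFactors hp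
  rw [hfil, Finset.prod_inv_distrib] at h
  have ht : (N.totient : ℝ) = N * ∏ p ∈ N.primeFactors, (1 - (p : ℝ)⁻¹) := by
    have := congrArg (fun x : ℚ => (x : ℝ)) (Nat.totient_eq_mul_prod_factors N)
    push_cast at this
    exact this
  have hN' : (N : ℝ) ≠ 0 := by exact_mod_cast hN
  rw [ht, div_mul_eq_div_div, div_self hN', one_div]
  exact h

/-- `L ≥ (φ(q)/q) log R`: each `m ≤ R` is grouped under the radical of its part coprime to `q`. -/
lemma log_le_sieveSum {q R : ℕ} (hq : 1 ≤ q) (hR : 1 ≤ R) :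
    (q.totient : ℝ) / q * Real.log R ≤ sieveSum q R := by
  have hφ : 0 < (q.totient : ℝ) := by exact_mod_cast Nat.totient_pos.2 hq
  have hq0 : 0 < (q : ℝ) := by exact_mod_cast hq
  have hharm : Real.log R ≤ ∑ m ∈ Finset.Icc 1 R, ((m : ℕ) : ℝ)⁻¹ := by
    have h1 := log_add_one_le_harmonic R
    rw [harmonic_eq_sum_Icc] at h1
    push_cast at h1
    refine le_trans (Real.log_le_log (by exact_mod_cast hR) (by norm_num)) h1
  let F : ℕ → ℕ := fun m => ∏ p ∈ m.primeFactors \ q.primeFactors, p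
  have hFpf : ∀ m, (F m).primeFactors = m.primeFactors \ q.primeFactors := by
    intro m
    exact Nat.primeFactors_prod (fun p hp => Nat.prime_of_mem_primeFactors (Finset.mem_sdiff.1 hp).1)
  have hFdvd : ∀ m, F m ∣ m := by
    intro m
    exact (Finset.prod_dvd_prod_of_subset _ _ _ Finset.sdiff_subset).trans
      (Nat.prod_primeFactors_dvd m)
  have hmaps : ∀ m ∈ Finset.Icc 1 R, F m ∈ sieveSupport q R := by
    intro m hm
    rw [Finset.mem_Icc] at hm
    rw [mem_sieveSupport]
    have hpos : 0 < F m := Nat.pos_of_dvd_of_pos (hFdvd m) (by omega)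
    refine ⟨⟨hpos, (Nat.le_of_dvd (by omega) (hFdvd m)).trans hm.2⟩, ?_, ?_⟩
    · have hd : F m ∣ ∏ p ∈ m.primeFactors, p :=
        Finset.prod_dvd_prod_of_subset _ _ _ Finset.sdiff_subset
      refine Squarefree.squarefree_of_dvd hd ?_
      rw [← Nat.radical_eq_prod_primeFactors]
      exact UniqueFactorizationMonoid.squarefree_radical
    · rw [← Nat.disjoint_primeFactors hpos.ne' (by omega), hFpf]
      exact Finset.sdiff_disjoint
  have key : ∑ m ∈ Finset.Icc 1 R, ((m : ℕ) : ℝ)⁻¹ ≤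
      ∑ n ∈ sieveSupport q R, (q : ℝ) / q.totient * (1 / (n.totient : ℝ)) := by
    rw [← Finset.sum_fiberwise_of_maps_to hmaps]
    refine Finset.sum_le_sum fun n hn => ?_
    have hn' := mem_sieveSupport.1 hn
    have hn0 : 0 < (n : ℝ) := by exact_mod_cast hn'.1.1
    have hs := sum_inv_factored (n * q) (Nat.mul_ne_zero (by omega) (by omega))
    have hle : ∑ m ∈ Finset.Icc 1 R with F m = n, ((m : ℕ) : ℝ)⁻¹ ≤
        (n : ℝ)⁻¹ * (((n * q : ℕ) : ℝ) / (n * q).totient) := by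
      have hinj : Set.InjOn (fun m => m / n)
          ((Finset.Icc 1 R).filter (fun m => F m = n) : Finset ℕ) := by
        intro m hm m' hm' h
        rw [Finset.mem_coe, Finset.mem_filter] at hm hm'
        have h1 : n ∣ m := hm.2 ▸ hFdvd m
        have h2 : n ∣ m' := hm'.2 ▸ hFdvd m'
        dsimp only at h
        rw [← Nat.div_mul_cancel h1, ← Nat.div_mul_cancel h2, h]
      have hmem : ∀ m ∈ (Finset.Icc 1 R).filter (fun m => F m = n),
          m / n ∈ Nat.factoredNumbers (n * q).primeFactors := by
        intro m hm
        rw [Finset.mem_filter, Finset.mem_Icc] at hm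
        have h1 : n ∣ m := hm.2 ▸ hFdvd m
        have hm0 : m / n ≠ 0 := (Nat.div_pos (Nat.le_of_dvd (by omega) h1) (by omega)).ne'
        apply Nat.mem_factoredNumbers_of_primeFactors_subset hm0
        rw [Nat.primeFactors_mul (by omega) (by omega)]
        refine (Nat.primeFactors_mono (Nat.div_dvd_of_dvd h1) (by omega)).trans ?_
        intro p hp
        rw [Finset.mem_union, ← hm.2, hFpf]
        by_cases hpq : p ∈ q.primeFactors
        · exact Or.inr hpq
        · exact Or.inl (Finset.mem_sdiff.2 ⟨hp, hpq⟩)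
      calc ∑ m ∈ Finset.Icc 1 R with F m = n, ((m : ℕ) : ℝ)⁻¹
          = ∑ m ∈ Finset.Icc 1 R with F m = n, (n : ℝ)⁻¹ * (((m / n : ℕ) : ℝ))⁻¹ := by
            refine Finset.sum_congr rfl fun m hm => ?_
            have h1 : n ∣ m := (Finset.mem_filter.1 hm).2 ▸ hFdvd m
            rw [← mul_inv, ← Nat.cast_mul, Nat.mul_div_cancel' h1]
        _ = (n : ℝ)⁻¹ * ∑ m ∈ Finset.Icc 1 R with F m = n, (((m / n : ℕ) : ℝ))⁻¹ := by
            rw [Finset.mul_sum]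
        _ ≤ _ := by
            gcongr
            rw [← hs.tsum_eq, ← Finset.sum_attach]
            let e : {m // m ∈ (Finset.Icc 1 R).filter (fun m => F m = n)} →
                Nat.factoredNumbers (n * q).primeFactors := fun m => ⟨m.1 / n, hmem m.1 m.2⟩
            have he : Function.Injective e := by
              intro m m' h
              exact Subtype.ext (hinj m.2 m'.2 (congrArg Subtype.val h))
            have := hs.summable.sum_le_tsum (Finset.univ.map ⟨e, he⟩)
              (fun i _ => by positivity)
            simpa [e] using this
    refine hle.trans (le_of_eq ?_)
    rw [Nat.totient_mul hn'.2.2]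
    have : 0 < (n.totient : ℝ) := by exact_mod_cast Nat.totient_pos.2 (by omega)
    push_cast
    field_simp
  rw [← Finset.mul_sum] at key
  have := hharm.trans key
  rw [show (∑ n ∈ sieveSupport q R, 1 / (n.totient : ℝ)) = sieveSum q R from rfl] at this
  rw [div_mul_eq_mul_div] at this ⊢
  rw [le_div_iff₀ hφ] at this
  rw [div_le_iff₀ hq0]
  linarith

/-! ### Selberg's sieve and the Brun–Titchmarsh bound -/

open ArithmeticFunction in
/-- Selberg's weights, `λ_d = d ∑_{d ∣ n} μ(n/d) μ(n) / (φ(n) L)`. -/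
noncomputable def selbergWeight (q R d : ℕ) : ℝ :=
  d * ∑ n ∈ sieveSupport q R with d ∣ n,
    (moebius (n / d) : ℝ) * (moebius n / (n.totient * sieveSum q R))

open ArithmeticFunction in
lemma sum_moebius_between {m n : ℕ} (hm : m ∣ n) (hn : n ≠ 0) :
    ∑ d ∈ n.divisors with m ∣ d, (moebius (n / d) : ℝ) = if n = m then 1 else 0 := by
  obtain ⟨t, rfl⟩ := hm
  have hm0 : m ≠ 0 := left_ne_zero_of_mul hn
  have ht0 : t ≠ 0 := right_ne_zero_of_mul hn
  have h1 : ∑ d ∈ (m * t).divisors with m ∣ d, (moebius (m * t / d) : ℝ) =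
      ∑ e ∈ t.divisors, (moebius (t / e) : ℝ) := by
    symm
    refine Finset.sum_bij (fun e _ => m * e) ?_ ?_ ?_ ?_
    · intro e he
      simp only [Finset.mem_filter, Nat.mem_divisors] at he ⊢
      exact ⟨⟨Nat.mul_dvd_mul_left m he.1, hn⟩, Dvd.intro _ rfl⟩
    · intro a _ b _ h
      exact Nat.eq_of_mul_eq_mul_left (Nat.pos_of_ne_zero hm0) h
    · intro b hb
      simp only [Finset.mem_filter, Nat.mem_divisors] at hb
      obtain ⟨c, rfl⟩ := hb.2
      exact ⟨c, Nat.mem_divisors.2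
        ⟨Nat.dvd_of_mul_dvd_mul_left (Nat.pos_of_ne_zero hm0) hb.1.1, ht0⟩, rfl⟩
    · intro e he
      rw [Nat.mul_div_mul_left _ _ (Nat.pos_of_ne_zero hm0)]
  rw [h1, Nat.sum_div_divisors t (fun e => (moebius e : ℝ))]
  have h2 : ∑ e ∈ t.divisors, (moebius e : ℤ) = if t = 1 then 1 else 0 := by
    rw [← coe_mul_zeta_apply, moebius_mul_coe_zeta, one_apply]
  have h3 : (m * t = m) ↔ t = 1 := by
    constructor
    · intro h; exact Nat.eq_of_mul_eq_mul_left (Nat.pos_of_ne_zero hm0) (by simpa using h)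
    · rintro rfl; simp
  simp only [h3]
  have h4 := congrArg (fun z : ℤ => (z : ℝ)) h2
  push_cast at h4
  exact h4

open ArithmeticFunction in
/-- The Selberg weights diagonalise: `∑_{m ∣ d} λ_d / d = μ(m) / (φ(m) L)`. -/
lemma sum_selbergWeight_div {q R m : ℕ} (hm : m ∈ sieveSupport q R) :
    ∑ d ∈ sieveSupport q R with m ∣ d, selbergWeight q R d / d =
      moebius m / (m.totient * sieveSum q R) := by
  have h1 : ∀ d ∈ (sieveSupport q R).filter (fun d => m ∣ d), selbergWeight q R d / d =
      ∑ n ∈ sieveSupport q R, if d ∣ n then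
        (moebius (n / d) : ℝ) * (moebius n / (n.totient * sieveSum q R)) else 0 := by
    intro d hd
    have : (d : ℝ) ≠ 0 := by
      have := (mem_sieveSupport.1 (Finset.mem_filter.1 hd).1).1.1
      exact_mod_cast (by omega : d ≠ 0)
    rw [selbergWeight, mul_div_cancel_left₀ _ this, Finset.sum_filter]
  rw [Finset.sum_congr rfl h1, Finset.sum_comm]
  have h2 : ∀ n ∈ sieveSupport q R,
      (∑ d ∈ sieveSupport q R with m ∣ d, if d ∣ n then
        (moebius (n / d) : ℝ) * (moebius n / (n.totient * sieveSum q R)) else 0) =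
      if n = m then (moebius m : ℝ) / (m.totient * sieveSum q R) else 0 := by
    intro n hn
    have hn0 : n ≠ 0 := by have := (mem_sieveSupport.1 hn).1.1; omega
    rw [← Finset.sum_filter, ← Finset.sum_mul]
    have hset : ((sieveSupport q R).filter (fun d => m ∣ d)).filter (fun d => d ∣ n) =
        n.divisors.filter (fun d => m ∣ d) := by
      ext d
      simp only [Finset.mem_filter, Nat.mem_divisors]
      constructor
      · rintro ⟨⟨_, h2⟩, h3⟩; exact ⟨⟨h3, hn0⟩, h2⟩
      · rintro ⟨⟨h3, _⟩, h2⟩; exact ⟨⟨mem_sieveSupport_of_dvd hn h3, h2⟩, h3⟩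
    rw [hset]
    by_cases hmn : m ∣ n
    · rw [sum_moebius_between hmn hn0]
      split_ifs with h
      · subst h; ring
      · ring
    · have : n.divisors.filter (fun d => m ∣ d) = ∅ := by
        rw [Finset.filter_eq_empty_iff]
        intro d hd hmd
        exact hmn (hmd.trans (Nat.dvd_of_mem_divisors hd))
      rw [this, Finset.sum_empty, zero_mul, if_neg]
      rintro rfl; exact hmn dvd_rfl
  rw [Finset.sum_congr rfl h2, Finset.sum_ite_eq' (sieveSupport q R) m, if_pos hm]

open ArithmeticFunction in
lemma selbergWeight_one {q R : ℕ} (hR : 1 ≤ R) : selbergWeight q R 1 = 1 := by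
  have hL := sieveSum_pos (q := q) hR
  rw [selbergWeight]
  simp only [Nat.cast_one, one_mul, Nat.div_one, one_dvd, Finset.filter_true]
  rw [Finset.sum_congr rfl (g := fun n => 1 / (n.totient : ℝ) * (1 / sieveSum q R)),
    ← Finset.sum_mul]
  · change sieveSum q R * _ = 1
    field_simp
  · intro n hn
    have hsq : ((moebius n : ℤ) : ℝ) * moebius n = 1 := by
      have := (moebius_sq_eq_one_of_squarefree (mem_sieveSupport.1 hn).2.1)
      rw [sq] at this
      exact_mod_cast this
    rw [mul_div_assoc', hsq]
    ring

/-- `d ∑_{d ∣ n} 1/φ(n) ≤ L`: write `d = ∑_{l ∣ d} φ(l)`, so that the left side is the sum of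
`1/φ(n/l)`, and `(n, l) ↦ n/l` is injective. -/
lemma mul_sum_le_sieveSum {q R d : ℕ} (hd : d ∈ sieveSupport q R) :
    (d : ℝ) * ∑ n ∈ sieveSupport q R with d ∣ n, 1 / (n.totient : ℝ) ≤ sieveSum q R := by
  have hd' := mem_sieveSupport.1 hd
  have hsum : (d : ℝ) = ∑ l ∈ d.divisors, (l.totient : ℝ) := by
    exact_mod_cast (Nat.sum_totient d).symm
  rw [hsum, Finset.sum_mul_sum, ← Finset.sum_product']
  have hfac : ∀ x ∈ d.divisors ×ˢ (sieveSupport q R).filter (fun n => d ∣ n),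
      x.1 ∣ x.2 ∧ x.1.Coprime (x.2 / x.1) ∧ x.2 ∈ sieveSupport q R ∧ d ∣ x.2 ∧ x.1 ∣ d := by
    rintro ⟨l, n⟩ hx
    simp only [Finset.mem_product, Nat.mem_divisors, Finset.mem_filter] at hx
    have hln : l ∣ n := hx.1.1.trans hx.2.2
    refine ⟨hln, ?_, hx.2.1, hx.2.2, hx.1.1⟩
    apply Nat.coprime_of_squarefree_mul
    rw [Nat.mul_div_cancel' hln]
    exact (mem_sieveSupport.1 hx.2.1).2.1
  have h1 : ∀ x ∈ d.divisors ×ˢ (sieveSupport q R).filter (fun n => d ∣ n),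
      (x.1.totient : ℝ) * (1 / (x.2.totient : ℝ)) = 1 / ((x.2 / x.1).totient : ℝ) := by
    intro x hx
    obtain ⟨h1, h2, h3, -, -⟩ := hfac x hx
    have h4 : x.2.totient = x.1.totient * (x.2 / x.1).totient := by
      rw [← Nat.totient_mul h2, Nat.mul_div_cancel' h1]
    have h5 : 0 < x.2.totient := Nat.totient_pos.2 (by have := mem_sieveSupport.1 h3; omega)
    rw [h4] at h5 ⊢
    have h6 : (x.1.totient : ℝ) ≠ 0 := by
      exact_mod_cast (Nat.pos_of_mul_pos_right h5).ne'
    have h7 : ((x.2 / x.1).totient : ℝ) ≠ 0 := by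
      exact_mod_cast (Nat.pos_of_mul_pos_left h5).ne'
    push_cast
    field_simp
  rw [Finset.sum_congr rfl h1]
  have hinj : Set.InjOn (fun x : ℕ × ℕ => x.2 / x.1)
      (d.divisors ×ˢ (sieveSupport q R).filter (fun n => d ∣ n) : Finset (ℕ × ℕ)) := by
    have key : ∀ x ∈ d.divisors ×ˢ (sieveSupport q R).filter (fun n => d ∣ n),
        Nat.gcd (x.2 / x.1) d = d / x.1 := by
      intro x hx
      obtain ⟨h1, h2, h3, ⟨m, hm⟩, h5⟩ := hfac x hx
      obtain ⟨e, he⟩ := h5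
      have hx1 : 0 < x.1 := Nat.pos_of_dvd_of_pos h1 (by have := mem_sieveSupport.1 h3; omega)
      have hsq := (mem_sieveSupport.1 h3).2.1
      have hx2 : x.2 / x.1 = e * m := by
        rw [hm, he, mul_assoc, Nat.mul_div_cancel_left _ hx1]
      have hde : d / x.1 = e := by rw [he, Nat.mul_div_cancel_left _ hx1]
      have hcop : Nat.Coprime x.1 m := by
        rw [hm, he] at hsq
        have : Nat.Coprime (x.1 * e) m := Nat.coprime_of_squarefree_mul hsq
        exact this.coprime_dvd_left (Dvd.intro _ rfl)
      rw [hx2, hde, he, mul_comm x.1 e, Nat.gcd_mul_left, hcop.symm.gcd_eq_one, mul_one]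
    intro x hx y hy hxy
    have kx := key x hx
    have ky := key y hy
    dsimp only at hxy
    rw [hxy, ky] at kx
    obtain ⟨h1, -, -, -, h5⟩ := hfac x hx
    obtain ⟨h1', -, -, -, h5'⟩ := hfac y hy
    have hd0 : d ≠ 0 := by omega
    have e1 : x.1 = y.1 := by
      have a := Nat.div_mul_cancel h5
      have b := Nat.div_mul_cancel h5'
      rw [kx] at b
      have hne : d / x.1 ≠ 0 := by
        intro h; rw [h] at a; omega
      exact Nat.eq_of_mul_eq_mul_left (Nat.pos_of_ne_zero hne) (a.trans b.symm)
    have e2 : x.2 = y.2 := by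
      rw [← Nat.div_mul_cancel h1, ← Nat.div_mul_cancel h1', hxy, e1]
    exact Prod.ext e1 e2
  rw [← Finset.sum_image (f := fun n : ℕ => 1 / (n.totient : ℝ)) hinj]
  refine Finset.sum_le_sum_of_subset_of_nonneg ?_ (fun _ _ _ => by positivity)
  intro n hn
  obtain ⟨x, hx, rfl⟩ := Finset.mem_image.1 hn
  obtain ⟨h1, -, h3, -, -⟩ := hfac x hx
  exact mem_sieveSupport_of_dvd h3 (Nat.div_dvd_of_dvd h1)

open ArithmeticFunction in
lemma abs_selbergWeight_le_one {q R d : ℕ} (hR : 1 ≤ R) (hd : d ∈ sieveSupport q R) :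
    |selbergWeight q R d| ≤ 1 := by
  have hL := sieveSum_pos (q := q) hR
  have hμ : ∀ n : ℕ, |((moebius n : ℤ) : ℝ)| ≤ 1 := fun n => by
    exact_mod_cast abs_moebius_le_one
  rw [selbergWeight, abs_mul, Nat.abs_cast]
  calc (d : ℝ) * |∑ n ∈ sieveSupport q R with d ∣ n,
        (moebius (n / d) : ℝ) * (moebius n / (n.totient * sieveSum q R))|
      ≤ d * ∑ n ∈ sieveSupport q R with d ∣ n, 1 / (n.totient : ℝ) * (1 / sieveSum q R) := by
        gcongr
        refine (Finset.abs_sum_le_sum_abs _ _).trans (Finset.sum_le_sum fun n _ => ?_)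
        rw [abs_mul, abs_div, abs_of_nonneg (by positivity : 0 ≤ (n.totient : ℝ) * sieveSum q R)]
        calc _ ≤ 1 * (1 / ((n.totient : ℝ) * sieveSum q R)) := by
              gcongr
              · exact hμ _
              · exact hμ _
          _ = _ := by rw [one_mul, one_div_mul_one_div]
    _ = (d * ∑ n ∈ sieveSupport q R with d ∣ n, 1 / (n.totient : ℝ)) / sieveSum q R := by
        rw [← Finset.sum_mul]; ring
    _ ≤ 1 := by
        rw [div_le_one hL]; exact mul_sum_le_sieveSum hd

open ArithmeticFunction in
/-- The minimum of Selberg's quadratic form is `1/L`. -/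
lemma selberg_quadratic_form {q R : ℕ} (hR : 1 ≤ R) :
    ∑ d ∈ sieveSupport q R, ∑ e ∈ sieveSupport q R,
      selbergWeight q R d * selbergWeight q R e / (Nat.lcm d e : ℝ) = 1 / sieveSum q R := by
  have hL := sieveSum_pos (q := q) hR
  have h1 : ∀ d ∈ sieveSupport q R, ∀ e ∈ sieveSupport q R,
      selbergWeight q R d * selbergWeight q R e / (Nat.lcm d e : ℝ) =
      ∑ m ∈ sieveSupport q R, (m.totient : ℝ) *
        ((if m ∣ d then selbergWeight q R d / d else 0) *
          (if m ∣ e then selbergWeight q R e / e else 0)) := by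
    intro d hd e he
    have hd0 : (d : ℝ) ≠ 0 := by
      have := (mem_sieveSupport.1 hd).1.1; exact_mod_cast (by omega : d ≠ 0)
    have he0 : (e : ℝ) ≠ 0 := by
      have := (mem_sieveSupport.1 he).1.1; exact_mod_cast (by omega : e ≠ 0)
    have hl0 : (Nat.lcm d e : ℝ) ≠ 0 := by
      exact_mod_cast Nat.lcm_ne_zero (by exact_mod_cast hd0) (by exact_mod_cast he0)
    have hgl : (Nat.gcd d e : ℝ) * (Nat.lcm d e : ℝ) = d * e := by
      exact_mod_cast Nat.gcd_mul_lcm d e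
    have hg : ∑ m ∈ sieveSupport q R with (m ∣ d ∧ m ∣ e), (m.totient : ℝ) = Nat.gcd d e := by
      have hset : (sieveSupport q R).filter (fun m => m ∣ d ∧ m ∣ e) = (Nat.gcd d e).divisors := by
        ext m
        simp only [Finset.mem_filter, Nat.mem_divisors, Nat.dvd_gcd_iff]
        constructor
        · rintro ⟨_, h⟩
          refine ⟨h, ?_⟩
          have : d ≠ 0 := by exact_mod_cast hd0
          exact Nat.gcd_ne_zero_left this
        · rintro ⟨h, _⟩; exact ⟨mem_sieveSupport_of_dvd hd h.1, h⟩
      rw [hset]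
      exact_mod_cast Nat.sum_totient _
    have h2 : ∀ m ∈ sieveSupport q R, (m.totient : ℝ) *
        ((if m ∣ d then selbergWeight q R d / d else 0) *
          (if m ∣ e then selbergWeight q R e / e else 0)) =
        if (m ∣ d ∧ m ∣ e) then (m.totient : ℝ) *
          (selbergWeight q R d / d * (selbergWeight q R e / e)) else 0 := by
      intro m _
      by_cases a : m ∣ d <;> by_cases b : m ∣ e <;> simp [a, b]
    rw [Finset.sum_congr rfl h2, ← Finset.sum_filter, ← Finset.sum_mul, hg]
    field_simp
    linear_combination (-(selbergWeight q R d * selbergWeight q R e)) * hgl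
  rw [Finset.sum_congr rfl fun d hd => Finset.sum_congr rfl (h1 d hd)]
  have h3 : ∑ d ∈ sieveSupport q R, ∑ e ∈ sieveSupport q R, ∑ m ∈ sieveSupport q R,
      (m.totient : ℝ) * ((if m ∣ d then selbergWeight q R d / d else 0) *
          (if m ∣ e then selbergWeight q R e / e else 0)) =
      ∑ m ∈ sieveSupport q R, (m.totient : ℝ) *
        ((∑ d ∈ sieveSupport q R, if m ∣ d then selbergWeight q R d / d else 0) *
         (∑ e ∈ sieveSupport q R, if m ∣ e then selbergWeight q R e / e else 0)) := by
    simp_rw [Finset.sum_mul_sum, Finset.mul_sum]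
    rw [Finset.sum_congr rfl fun d _ => Finset.sum_comm, Finset.sum_comm]
  rw [h3]
  have h4 : ∀ m ∈ sieveSupport q R, (m.totient : ℝ) *
        ((∑ d ∈ sieveSupport q R, if m ∣ d then selbergWeight q R d / d else 0) *
         (∑ e ∈ sieveSupport q R, if m ∣ e then selbergWeight q R e / e else 0)) =
      1 / (m.totient : ℝ) * (1 / sieveSum q R ^ 2) := by
    intro m hm
    rw [← Finset.sum_filter, sum_selbergWeight_div hm]
    have hsq : ((moebius m : ℤ) : ℝ) ^ 2 = 1 := by
      exact_mod_cast (moebius_sq_eq_one_of_squarefree (mem_sieveSupport.1 hm).2.1)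
    have ht : (m.totient : ℝ) ≠ 0 := by
      have := Nat.totient_pos.2 (mem_sieveSupport.1 hm).1.1
      exact_mod_cast this.ne'
    field_simp
    exact hsq
  rw [Finset.sum_congr rfl h4, ← Finset.sum_mul]
  change sieveSum q R * _ = _
  field_simp

lemma card_progression_error {q r D x y : ℕ} (hq : 1 ≤ q) (hD : 1 ≤ D)
    (hqD : D.Coprime q) (hxy : x ≤ y) :
    |(((Finset.Ioc x y).filter (fun n => n ≡ r [MOD q] ∧ D ∣ n)).card : ℝ) -
      ((y : ℝ) - x) / q / D| ≤ 1 := by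
  obtain ⟨v, hv1, hv2⟩ := Nat.chineseRemainder hqD 0 r
  have hset : (Finset.Ioc x y).filter (fun n => n ≡ r [MOD q] ∧ D ∣ n) =
      (Finset.Ioc x y).filter (fun n => n ≡ v [MOD (D * q)]) := by
    apply Finset.filter_congr
    intro n _
    rw [← Nat.modEq_and_modEq_iff_modEq_mul hqD]
    constructor
    · rintro ⟨h1, h2⟩
      exact ⟨((Nat.modEq_zero_iff_dvd.2 h2)).trans hv1.symm, h1.trans hv2.symm⟩
    · rintro ⟨h1, h2⟩
      exact ⟨h2.trans hv2, Nat.modEq_zero_iff_dvd.1 (h1.trans hv1)⟩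
  rw [hset]
  have hDq : 0 < D * q := Nat.mul_pos hD hq
  have hc := Nat.Ioc_filter_modEq_card x y hDq v
  have hle : ⌊((x : ℚ) - v) / ((D * q : ℕ) : ℚ)⌋ ≤ ⌊((y : ℚ) - v) / ((D * q : ℕ) : ℚ)⌋ := by
    apply Int.floor_mono
    gcongr
  rw [max_eq_left (by linarith)] at hc
  set A : ℚ := ((y : ℚ) - v) / ((D * q : ℕ) : ℚ) with hA
  set B : ℚ := ((x : ℚ) - v) / ((D * q : ℕ) : ℚ) with hB
  have hAB : A - B = ((y : ℚ) - x) / q / D := by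
    have h1 : (q : ℚ) ≠ 0 := by exact_mod_cast (by omega : q ≠ 0)
    have h2 : (D : ℚ) ≠ 0 := by exact_mod_cast (by omega : D ≠ 0)
    rw [hA, hB]; push_cast; field_simp; ring
  have hq' : |((((Finset.Ioc x y).filter (fun n => n ≡ v [MOD (D * q)])).card : ℤ) : ℚ) -
      ((y : ℚ) - x) / q / D| ≤ 1 := by
    rw [hc, ← hAB, abs_le]
    push_cast
    constructor <;>
    linarith [Int.floor_le A, Int.lt_floor_add_one A, Int.floor_le B, Int.lt_floor_add_one B]
  have h := (Rat.cast_le (K := ℝ)).2 hq'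
  push_cast at h
  exact h

/-- **Brun–Titchmarsh**, from Selberg's sieve: an upper bound of the right order for the number of
primes in an interval of an arithmetic progression. -/
lemma brun_titchmarsh {q r R x y : ℕ} (hq : 1 ≤ q) (hR : 2 ≤ R) (hxy : x ≤ y) :
    (((Finset.Ioc x y).filter (fun p => p.Prime ∧ R < p ∧ p ≡ r [MOD q])).card : ℝ) ≤
      ((y : ℝ) - x) / (q.totient * Real.log R) + (R : ℝ) ^ 2 := by
  have hR1 : 1 ≤ R := by omega
  have hL := sieveSum_pos (q := q) hR1
  set S := (Finset.Ioc x y).filter (fun n => n ≡ r [MOD q]) with hS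
  set w : ℕ → ℝ := fun n => ∑ d ∈ sieveSupport q R, if d ∣ n then selbergWeight q R d else 0
    with hw
  have hw1 : ∀ p : ℕ, p.Prime → R < p → w p = 1 := by
    intro p hp hRp
    rw [hw]; dsimp only
    rw [← Finset.sum_filter]
    have : (sieveSupport q R).filter (fun d => d ∣ p) = {1} := by
      ext d
      simp only [Finset.mem_filter, Finset.mem_singleton]
      constructor
      · rintro ⟨h1, h2⟩
        rcases (Nat.dvd_prime hp).1 h2 with h | h
        · exact h
        · have := (mem_sieveSupport.1 h1).1.2; omega
      · rintro rfl; exact ⟨one_mem_sieveSupport hR1, one_dvd _⟩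
    rw [this, Finset.sum_singleton, selbergWeight_one hR1]
  have step1 : (((Finset.Ioc x y).filter (fun p => p.Prime ∧ R < p ∧ p ≡ r [MOD q])).card : ℝ) ≤
      ∑ n ∈ S, w n ^ 2 := by
    rw [Finset.card_eq_sum_ones, Nat.cast_sum]
    calc _ = ∑ n ∈ (Finset.Ioc x y).filter (fun p => p.Prime ∧ R < p ∧ p ≡ r [MOD q]),
          w n ^ 2 := by
          refine Finset.sum_congr rfl fun p hp => ?_
          have hp' := (Finset.mem_filter.1 hp).2
          rw [hw1 p hp'.1 hp'.2.1]; norm_num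
      _ ≤ _ := by
          refine Finset.sum_le_sum_of_subset_of_nonneg ?_ (fun _ _ _ => sq_nonneg _)
          intro p hp
          have hp' := Finset.mem_filter.1 hp
          exact Finset.mem_filter.2 ⟨hp'.1, hp'.2.2.2⟩
  have step2 : ∑ n ∈ S, w n ^ 2 = ∑ d ∈ sieveSupport q R, ∑ e ∈ sieveSupport q R,
      selbergWeight q R d * selbergWeight q R e *
        ((S.filter (fun n => Nat.lcm d e ∣ n)).card : ℝ) := by
    have : ∀ n ∈ S, w n ^ 2 = ∑ d ∈ sieveSupport q R, ∑ e ∈ sieveSupport q R,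
        if Nat.lcm d e ∣ n then selbergWeight q R d * selbergWeight q R e else 0 := by
      intro n _
      rw [hw, sq]; dsimp only
      rw [Finset.sum_mul_sum]
      refine Finset.sum_congr rfl fun d _ => Finset.sum_congr rfl fun e _ => ?_
      simp only [Nat.lcm_dvd_iff]
      by_cases a : d ∣ n <;> by_cases b : e ∣ n <;> simp [a, b]
    rw [Finset.sum_congr rfl this, Finset.sum_comm]
    refine Finset.sum_congr rfl fun d _ => ?_
    rw [Finset.sum_comm]
    refine Finset.sum_congr rfl fun e _ => ?_
    rw [← Finset.sum_filter, Finset.sum_const, nsmul_eq_mul, mul_comm]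
  have step3 : ∑ d ∈ sieveSupport q R, ∑ e ∈ sieveSupport q R,
      selbergWeight q R d * selbergWeight q R e *
        ((S.filter (fun n => Nat.lcm d e ∣ n)).card : ℝ) ≤
      ∑ d ∈ sieveSupport q R, ∑ e ∈ sieveSupport q R,
        (((y : ℝ) - x) / q * (selbergWeight q R d * selbergWeight q R e / (Nat.lcm d e : ℝ)) + 1) := by
    refine Finset.sum_le_sum fun d hd => Finset.sum_le_sum fun e he => ?_
    have hd' := mem_sieveSupport.1 hd
    have he' := mem_sieveSupport.1 he
    have hl : 1 ≤ Nat.lcm d e := Nat.pos_of_ne_zero (Nat.lcm_ne_zero (by omega) (by omega))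
    have hlc : (Nat.lcm d e).Coprime q :=
      Nat.Coprime.coprime_dvd_left (Nat.lcm_dvd_mul d e)
        (Nat.Coprime.mul_left hd'.2.2 he'.2.2)
    have herr := card_progression_error (r := r) hq hl hlc hxy
    rw [hS, Finset.filter_filter]
    set N : ℝ := (((Finset.Ioc x y).filter (fun n => n ≡ r [MOD q] ∧ Nat.lcm d e ∣ n)).card : ℝ)
    set W := selbergWeight q R d * selbergWeight q R e with hW
    have hWle : |W| ≤ 1 := by
      rw [hW, abs_mul]
      exact mul_le_one₀ (abs_selbergWeight_le_one hR1 hd) (abs_nonneg _)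
        (abs_selbergWeight_le_one hR1 he)
    have h1 : W * (N - ((y : ℝ) - x) / q / (Nat.lcm d e : ℝ)) ≤ 1 := by
      refine (le_abs_self _).trans ?_
      rw [abs_mul]
      exact mul_le_one₀ hWle (abs_nonneg _) herr
    have h2 : ((y : ℝ) - x) / q * (W / (Nat.lcm d e : ℝ)) =
      W * (((y : ℝ) - x) / q / (Nat.lcm d e : ℝ)) := by ring
    rw [h2]; linarith
  have step4 : ∑ d ∈ sieveSupport q R, ∑ e ∈ sieveSupport q R,
        (((y : ℝ) - x) / q * (selbergWeight q R d * selbergWeight q R e / (Nat.lcm d e : ℝ)) + 1) =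
      ((y : ℝ) - x) / q * (1 / sieveSum q R) + ((sieveSupport q R).card : ℝ) ^ 2 := by
    rw [← selberg_quadratic_form hR1]
    simp only [Finset.sum_add_distrib, Finset.mul_sum, Finset.sum_const, nsmul_eq_mul, mul_one]
    ring
  have hcard : ((sieveSupport q R).card : ℝ) ≤ R := by
    have : (sieveSupport q R).card ≤ (Finset.Icc 1 R).card := Finset.card_filter_le _ _
    rw [Nat.card_Icc] at this
    exact_mod_cast this
  have hmain : ((y : ℝ) - x) / q * (1 / sieveSum q R) ≤
      ((y : ℝ) - x) / (q.totient * Real.log R) := by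
    have hlog : 0 < Real.log R := Real.log_pos (by exact_mod_cast hR)
    have hφ : 0 < (q.totient : ℝ) := by exact_mod_cast Nat.totient_pos.2 hq
    have hq0 : 0 < (q : ℝ) := by exact_mod_cast hq
    have hyx : 0 ≤ (y : ℝ) - x := by
      have : (x : ℝ) ≤ y := by exact_mod_cast hxy
      linarith
    have hl := log_le_sieveSum hq hR1
    calc ((y : ℝ) - x) / q * (1 / sieveSum q R)
        ≤ ((y : ℝ) - x) / q * (1 / ((q.totient : ℝ) / q * Real.log R)) := by
          gcongr
      _ = _ := by field_simp
  calc _ ≤ _ := step1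
    _ = _ := step2
    _ ≤ _ := step3
    _ = _ := step4
    _ ≤ _ := by gcongr

/-! ### Residues whose phase is near an integer -/

/-- `x` lies within `η` of an integer. -/
def Near (η x : ℝ) : Prop := ∃ m : ℤ, |x - m| ≤ η

lemma Near.add_int {η x y : ℝ} (h : Near η x) (n : ℤ) (hxy : y = x + n) : Near η y := by
  obtain ⟨m, hm⟩ := h
  refine ⟨m + n, ?_⟩
  push_cast
  rw [hxy, show x + n - (m + n : ℝ) = x - m by ring]
  exact hm

lemma Near.perturb {η ε x y : ℝ} (h : Near η x) (hxy : |y - x| ≤ ε) : Near (η + ε) y := by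
  obtain ⟨m, hm⟩ := h
  refine ⟨m, ?_⟩
  calc |y - m| = |(x - m) + (y - x)| := by ring_nf
    _ ≤ |x - m| + |y - x| := abs_add_le _ _
    _ ≤ η + ε := add_le_add hm hxy

lemma Near.neg {η x : ℝ} (h : Near η x) : Near η (-x) := by
  obtain ⟨m, hm⟩ := h
  refine ⟨-m, ?_⟩
  push_cast
  rw [show -x - -(m : ℝ) = -(x - m) by ring, abs_neg]
  exact hm

open Classical in
/-- The reduced residues `r` mod `q` for which `a r^k / q + y` is within `η` of an integer. -/
noncomputable def nearResidues (k q : ℕ) (a : ℤ) (η y : ℝ) : Finset ℕ :=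
  (Finset.range q).filter fun r => r.Coprime q ∧ Near η ((a : ℝ) * (r : ℝ) ^ k / q + y)

lemma mem_nearResidues {k q : ℕ} {a : ℤ} {η y : ℝ} {r : ℕ} : r ∈ nearResidues k q a η y ↔
    r < q ∧ r.Coprime q ∧ Near η ((a : ℝ) * (r : ℝ) ^ k / q + y) := by
  simp [nearResidues]

/-- The `k`-th power residues mod `q`, scaled by any unit, do not concentrate: a window of
half-width `η` on the circle captures at most a proportion `κ` of them. -/
def Good (k q : ℕ) (κ η : ℝ) : Prop :=
  ∀ a : ℤ, IsCoprime a (q : ℤ) → ∀ y : ℝ,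
    ((nearResidues k q a η y).card : ℝ) ≤ κ * q.totient

lemma card_le_of_mem_interval {T : Finset ℤ} {u v : ℝ} (huv : u ≤ v)
    (h : ∀ l ∈ T, u ≤ (l : ℝ) ∧ (l : ℝ) ≤ v) : (T.card : ℝ) ≤ v - u + 1 := by
  have hsub : T ⊆ Finset.Icc ⌈u⌉ ⌊v⌋ := by
    intro l hl
    rw [Finset.mem_Icc, Int.ceil_le, Int.le_floor]
    exact h l hl
  have h1 := Finset.card_le_card hsub
  rw [Int.card_Icc] at h1
  have h2 : (T.card : ℝ) ≤ ((⌊v⌋ + 1 - ⌈u⌉).toNat : ℝ) := by exact_mod_cast h1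
  refine h2.trans ?_
  rcases le_total 0 (⌊v⌋ + 1 - ⌈u⌉) with h | h
  · have h3 : ((⌊v⌋ + 1 - ⌈u⌉).toNat : ℝ) = ((⌊v⌋ + 1 - ⌈u⌉ : ℤ) : ℝ) := by
      exact_mod_cast Int.toNat_of_nonneg h
    rw [h3]; push_cast
    linarith [Int.floor_le v, Int.le_ceil u]
  · rw [Int.toNat_eq_zero.2 h]; push_cast; linarith

/-- A fibre of `r ↦ r^k` on reduced residues is no larger than the kernel. -/
lemma card_fiber_le {k q M : ℕ} (hq : 0 < q)
    (hM : Nat.card {x : (ZMod q)ˣ // x ^ k = 1} ≤ M) (T : Finset ℕ)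
    (hlt : ∀ r ∈ T, r < q) (hco : ∀ r ∈ T, r.Coprime q)
    (heq : ∀ r ∈ T, ∀ s ∈ T, ((r : ZMod q)) ^ k = (s : ZMod q) ^ k) : T.card ≤ M := by
  have : NeZero q := ⟨hq.ne'⟩
  rcases T.eq_empty_or_nonempty with rfl | ⟨r₀, hr₀⟩
  · simp
  refine le_trans ?_ hM
  let u₀ := ZMod.unitOfCoprime r₀ (hco r₀ hr₀)
  let f : T → {x : (ZMod q)ˣ // x ^ k = 1} := fun r =>
    ⟨ZMod.unitOfCoprime r.1 (hco r.1 r.2) * u₀⁻¹, by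
      rw [mul_pow, inv_pow, mul_inv_eq_one]
      apply Units.ext
      simpa [u₀, ZMod.coe_unitOfCoprime] using heq r.1 r.2 r₀ hr₀⟩
  have hf : Function.Injective f := by
    intro r s h
    have h1 : ZMod.unitOfCoprime r.1 (hco r.1 r.2) * u₀⁻¹ =
        ZMod.unitOfCoprime s.1 (hco s.1 s.2) * u₀⁻¹ := congrArg Subtype.val h
    have h2 := congrArg Units.val (mul_right_cancel h1)
    rw [ZMod.coe_unitOfCoprime, ZMod.coe_unitOfCoprime, ZMod.natCast_eq_natCast_iff] at h2
    exact Subtype.ext (Nat.ModEq.eq_of_lt_of_lt h2 (hlt _ r.2) (hlt _ s.2))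
  have := Nat.card_le_card_of_injective f hf
  rwa [Nat.card_eq_fintype_card, Fintype.card_coe] at this

/-- If `x ↦ x^k` has kernel of order at most `M` on `(ℤ/q)ˣ`, then a window of length `2η` meets at
most `M (2ηq + 1)` of the points `a r^k / q`, since these are `1/q`-spaced. -/
lemma card_nearResidues_le {k q M : ℕ} (hq : 0 < q)
    (hM : Nat.card {x : (ZMod q)ˣ // x ^ k = 1} ≤ M) {a : ℤ} (ha : IsCoprime a (q : ℤ))
    {η : ℝ} (hη : 0 ≤ η) (y : ℝ) :
    ((nearResidues k q a η y).card : ℝ) ≤ M * (2 * η * q + 1) := by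
  classical
  have hq0 : (0 : ℝ) < q := by exact_mod_cast hq
  have hex : ∀ r : ℕ, ∃ m : ℤ, r ∈ nearResidues k q a η y →
      |(a : ℝ) * (r : ℝ) ^ k / q + y - m| ≤ η := by
    intro r
    by_cases h : r ∈ nearResidues k q a η y
    · obtain ⟨m, hm⟩ := (mem_nearResidues.1 h).2.2
      exact ⟨m, fun _ => hm⟩
    · exact ⟨0, fun h' => absurd h' h⟩
  choose m hm using hex
  let z : ℕ → ℤ := fun r => a * (r : ℤ) ^ k - m r * q
  have hfib := Finset.card_le_mul_card_image (f := z) (nearResidues k q a η y) M (by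
    intro b _
    refine card_fiber_le hq hM _ ?_ ?_ ?_
    · intro r hr; exact (mem_nearResidues.1 (Finset.mem_filter.1 hr).1).1
    · intro r hr; exact (mem_nearResidues.1 (Finset.mem_filter.1 hr).1).2.1
    · intro r hr s hs
      have h1 : z r = z s := (Finset.mem_filter.1 hr).2.trans (Finset.mem_filter.1 hs).2.symm
      have h2 := congrArg (fun t : ℤ => (t : ZMod q)) h1
      simp only [z] at h2
      push_cast at h2
      rw [ZMod.natCast_self, mul_zero, mul_zero, sub_zero, sub_zero] at h2
      obtain ⟨s', t', hst⟩ := ha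
      have h3 := congrArg (fun t : ℤ => (t : ZMod q)) hst
      push_cast at h3
      rw [ZMod.natCast_self, mul_zero, add_zero] at h3
      calc (r : ZMod q) ^ k = (s' * a) * (r : ZMod q) ^ k := by rw [h3, one_mul]
        _ = s' * (a * (r : ZMod q) ^ k) := by ring
        _ = s' * (a * (s : ZMod q) ^ k) := by rw [h2]
        _ = (s' * a) * (s : ZMod q) ^ k := by ring
        _ = (s : ZMod q) ^ k := by rw [h3, one_mul])
  have hcard : (((nearResidues k q a η y).image z).card : ℝ) ≤ 2 * η * q + 1 := by
    have h0 : (q : ℝ) * (-y - η) ≤ q * (-y + η) :=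
      mul_le_mul_of_nonneg_left (by linarith) hq0.le
    refine (card_le_of_mem_interval h0 fun t ht => ?_).trans (le_of_eq (by ring))
    obtain ⟨r, hr, rfl⟩ := Finset.mem_image.1 ht
    have h := abs_le.1 (hm r hr)
    have hz : ((z r : ℤ) : ℝ) = q * ((a : ℝ) * (r : ℝ) ^ k / q - m r) := by
      simp only [z]; push_cast; field_simp
    rw [hz]
    constructor <;> apply mul_le_mul_of_nonneg_left _ hq0.le <;> linarith
  calc ((nearResidues k q a η y).card : ℝ)
      ≤ M * (((nearResidues k q a η y).image z).card : ℝ) := by exact_mod_cast hfib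
    _ ≤ _ := by gcongr

lemma good_of_kernel {k q M : ℕ} {κ η : ℝ} (hq : 0 < q) (hη : 0 ≤ η)
    (hM : Nat.card {x : (ZMod q)ˣ // x ^ k = 1} ≤ M)
    (hbound : M * (2 * η * q + 1) ≤ κ * q.totient) : Good k q κ η :=
  fun _ ha y => (card_nearResidues_le hq hM ha hη y).trans hbound

/-- Non-concentration is inherited from a unitary divisor, by the Chinese remainder theorem. -/
lemma Good.mul {k q₁ q₂ : ℕ} {κ η : ℝ} (h₁ : 0 < q₁) (h₂ : 0 < q₂) (hco : q₁.Coprime q₂)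
    (hg : Good k q₁ κ η) : Good k (q₁ * q₂) κ η := by
  classical
  intro a ha y
  have hq1 : (q₁ : ℝ) ≠ 0 := by exact_mod_cast h₁.ne'
  have hq2 : (q₂ : ℝ) ≠ 0 := by exact_mod_cast h₂.ne'
  obtain ⟨s, t, hst⟩ := Nat.isCoprime_iff_coprime.2 hco
  have hstR : (s : ℝ) * q₁ + t * q₂ = 1 := by exact_mod_cast hst
  have ha1 : IsCoprime (a * t) (q₁ : ℤ) := by
    apply IsCoprime.mul_left
    · refine IsCoprime.of_isCoprime_of_dvd_right ha ⟨(q₂ : ℤ), by push_cast; ring⟩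
    · exact ⟨q₂, s, by linarith⟩
  have hmaps : ∀ r ∈ nearResidues k (q₁ * q₂) a η y,
      r % q₂ ∈ (Finset.range q₂).filter (fun r => q₂.Coprime r) := by
    intro r hr
    have := (mem_nearResidues.1 hr).2.1
    rw [Finset.mem_filter, Finset.mem_range]
    refine ⟨Nat.mod_lt _ h₂, ?_⟩
    rw [Nat.coprime_comm, Nat.Coprime, ← Nat.gcd_rec]
    exact Nat.Coprime.coprime_mul_left this.symm
  rw [Finset.card_eq_sum_card_fiberwise hmaps]
  push_cast
  calc ∑ b ∈ (Finset.range q₂).filter (fun r => q₂.Coprime r),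
        (((nearResidues k (q₁ * q₂) a η y).filter (fun r => r % q₂ = b)).card : ℝ)
      ≤ ∑ b ∈ (Finset.range q₂).filter (fun r => q₂.Coprime r), κ * q₁.totient := by
        refine Finset.sum_le_sum fun b _ => ?_
        refine le_trans ?_ (hg (a * t) ha1 ((a : ℝ) * s * (b : ℝ) ^ k / q₂ + y))
        refine Nat.cast_le.2 ?_
        refine Finset.card_le_card_of_injOn (fun r => r % q₁) ?_ ?_
        · intro r hr
          obtain ⟨hr1, hrb⟩ := Finset.mem_filter.1 hr
          obtain ⟨-, hrc, hn⟩ := mem_nearResidues.1 hr1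
          rw [Finset.mem_coe, mem_nearResidues]
          refine ⟨Nat.mod_lt _ h₁, ?_, ?_⟩
          · rw [Nat.Coprime, ← Nat.gcd_rec]
            exact Nat.Coprime.coprime_mul_right hrc.symm
          · -- `a r^k / (q₁ q₂) = a t r^k / q₁ + a s r^k / q₂`, each summand depending modulo `1`
            -- only on `r` modulo the respective denominator
            have e1 : ((r % q₁ : ℕ) : ℤ) ^ k ≡ (r : ℤ) ^ k [ZMOD q₁] := by
              apply Int.ModEq.pow
              push_cast
              exact Int.mod_modEq _ _
            have e2 : (b : ℤ) ^ k ≡ (r : ℤ) ^ k [ZMOD q₂] := by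
              rw [← hrb]
              apply Int.ModEq.pow
              push_cast
              exact Int.mod_modEq _ _
            obtain ⟨c1, hc1⟩ := e1.dvd
            obtain ⟨c2, hc2⟩ := e2.dvd
            have hc1' : (r : ℝ) ^ k = ((r % q₁ : ℕ) : ℝ) ^ k + q₁ * c1 := by
              generalize r % q₁ = m at hc1 ⊢
              have : (r : ℤ) ^ k = (m : ℤ) ^ k + q₁ * c1 := by linarith
              have := congrArg (fun x : ℤ => (x : ℝ)) this
              push_cast at this
              exact_mod_cast this
            have hc2' : (r : ℝ) ^ k = (b : ℝ) ^ k + q₂ * c2 := by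
              have : (r : ℤ) ^ k = (b : ℤ) ^ k + q₂ * c2 := by linarith
              have := congrArg (fun x : ℤ => (x : ℝ)) this
              push_cast at this
              exact_mod_cast this
            refine hn.add_int (-(a * t * c1 + a * s * c2)) ?_
            have e : (a : ℝ) * (r : ℝ) ^ k / ((q₁ * q₂ : ℕ) : ℝ) =
                a * t * (((r % q₁ : ℕ) : ℝ) ^ k + q₁ * c1) / q₁ +
                a * s * ((b : ℝ) ^ k + q₂ * c2) / q₂ := by
              rw [← hc1', ← hc2']
              push_cast
              field_simp
              linear_combination (-(a : ℝ) * (r : ℝ) ^ k) * hstR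
            rw [e]; push_cast; field_simp; ring
        · intro r hr r' hr' h
          rw [Finset.mem_coe, Finset.mem_filter] at hr hr'
          have h2 : r ≡ r' [MOD q₂] := hr.2.trans hr'.2.symm
          have := (Nat.modEq_and_modEq_iff_modEq_mul hco).1 ⟨h, h2⟩
          exact Nat.ModEq.eq_of_lt_of_lt this (mem_nearResidues.1 hr.1).1
            (mem_nearResidues.1 hr'.1).1
    _ = κ * (q₁ * q₂).totient := by
        rw [Finset.sum_const, nsmul_eq_mul, Nat.totient_mul hco, ← Nat.totient_eq_card_coprime]
        push_cast; ring

/-! ### Kernels of power maps and non-concentrating moduli -/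

lemma card_kernel_of_isCyclic {G : Type*} [CommGroup G] [Finite G] [IsCyclic G] {k : ℕ}
    (hk : 0 < k) : Nat.card {x : G // x ^ k = 1} ≤ k := by
  classical
  have := Fintype.ofFinite G
  rw [Nat.card_eq_fintype_card, Fintype.card_subtype]
  exact IsCyclic.card_pow_eq_one_le hk

lemma card_kernel_of_cyclic_subgroup {G : Type*} [CommGroup G] [Finite G] (H : Subgroup G)
    [IsCyclic H] {k : ℕ} (hk : 0 < k) : Nat.card {x : G // x ^ k = 1} ≤ k * H.index := by
  classical
  have := Fintype.ofFinite G
  have := Fintype.ofFinite (G ⧸ H)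
  rw [Nat.card_eq_fintype_card, Fintype.card_subtype]
  refine (Finset.card_le_mul_card_image (f := fun x : G => (x : G ⧸ H)) _ k ?_).trans ?_
  · intro b hb
    obtain ⟨x₀, hx₀, rfl⟩ := Finset.mem_image.1 hb
    have hx₀' : x₀ ^ k = 1 := by simpa using hx₀
    refine le_trans ?_ (IsCyclic.card_pow_eq_one_le (α := H) hk)
    have hmem : ∀ x ∈ (Finset.univ.filter fun x : G => x ^ k = 1).filter
        (fun x : G => (x : G ⧸ H) = (x₀ : G ⧸ H)), x₀⁻¹ * x ∈ H ∧ (x₀⁻¹ * x) ^ k = 1 := by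
      intro x hx
      simp only [Finset.mem_filter, Finset.mem_univ, true_and] at hx
      refine ⟨QuotientGroup.eq.1 hx.2.symm, ?_⟩
      rw [mul_pow, inv_pow, hx₀', hx.1]; simp
    refine Finset.card_le_card_of_injOn
      (fun x => if h : x₀⁻¹ * x ∈ H then (⟨x₀⁻¹ * x, h⟩ : H) else 1) ?_ ?_
    · intro x hx
      have h := hmem x hx
      simp only [h.1, dif_pos, Finset.coe_filter, Finset.mem_univ, true_and, Set.mem_ofPred_eq]
      exact Subtype.ext (by simpa using h.2)
    · intro x hx y hy hxy
      have h := hmem x hx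
      have h' := hmem y hy
      simp only [h.1, h'.1, dif_pos] at hxy
      exact mul_left_cancel (congrArg Subtype.val hxy)
  · refine Nat.mul_le_mul_left k ?_
    refine (Finset.card_le_univ _).trans ?_
    rw [← Nat.card_eq_fintype_card, Subgroup.index]

lemma card_kernel_odd_prime_pow {k p n : ℕ} (hk : 0 < k) (hp : p.Prime) (hp2 : p ≠ 2) :
    Nat.card {x : (ZMod (p ^ n))ˣ // x ^ k = 1} ≤ k := by
  have : NeZero (p ^ n) := ⟨pow_ne_zero _ hp.ne_zero⟩
  have := ZMod.isCyclic_units_of_prime_pow p hp hp2 n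
  exact card_kernel_of_isCyclic hk

/-- The subgroup generated by `5` is cyclic of index at most `2` in `(ℤ/2^n)ˣ`. -/
lemma card_kernel_two_pow {k n : ℕ} (hk : 0 < k) :
    Nat.card {x : (ZMod (2 ^ n))ˣ // x ^ k = 1} ≤ 2 * k := by
  have : NeZero (2 ^ n) := ⟨by positivity⟩
  have hcard : Nat.card (ZMod (2 ^ n))ˣ = (2 ^ n).totient := by
    rw [Nat.card_eq_fintype_card, ZMod.card_units_eq_totient]
  rcases lt_or_ge n 2 with hn | hn
  · have h1 : Nat.card {x : (ZMod (2 ^ n))ˣ // x ^ k = 1} ≤ Nat.card (ZMod (2 ^ n))ˣ :=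
      Nat.card_le_card_of_injective _ Subtype.val_injective
    have h2 : (2 ^ n).totient ≤ 1 := by
      interval_cases n <;> decide
    omega
  · obtain ⟨m, rfl⟩ := Nat.exists_eq_add_of_le' hn
    have hc : Nat.Coprime 5 (2 ^ (m + 2)) := Nat.Coprime.pow_right _ (by decide)
    let u := ZMod.unitOfCoprime 5 hc
    have hu : orderOf u = 2 ^ m := by
      rw [← orderOf_units, ZMod.coe_unitOfCoprime]
      exact_mod_cast ZMod.orderOf_five m
    have hindex : (Subgroup.zpowers u).index = 2 := by
      have h := (Subgroup.zpowers u).index_mul_card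
      rw [Nat.card_zpowers, hu, hcard, Nat.totient_prime_pow Nat.prime_two (by omega)] at h
      have h3 : 2 ^ (m + 2 - 1) * (2 - 1) = 2 * 2 ^ m := by
        rw [show m + 2 - 1 = m + 1 by omega, pow_succ]; ring
      rw [h3] at h
      exact Nat.eq_of_mul_eq_mul_right (by positivity) h
    have := card_kernel_of_cyclic_subgroup (Subgroup.zpowers u) hk
    rw [hindex] at this
    omega

lemma card_kernel_thirtyFive : Nat.card {x : (ZMod 35)ˣ // x ^ 2 = 1} ≤ 4 := by
  have h1 : (Finset.univ.filter fun x : ZMod 35 => x ^ 2 = 1).card = 4 := by decide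
  let f : {x : (ZMod 35)ˣ // x ^ 2 = 1} → {x : ZMod 35 // x ^ 2 = 1} :=
    fun x => ⟨x.1, by rw [← Units.val_pow_eq_pow_val, x.2]; simp⟩
  have hf : Function.Injective f := by
    intro x y h
    exact Subtype.ext (Units.ext (congrArg Subtype.val h))
  have h2 := Nat.card_le_card_of_injective f hf
  rw [Nat.card_eq_fintype_card (α := {x : ZMod 35 // x ^ 2 = 1}), Fintype.card_subtype, h1] at h2
  exact h2

lemma prime_pow_le_two_mul_totient {p n : ℕ} (hp : p.Prime) : p ^ n ≤ 2 * (p ^ n).totient := by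
  rcases Nat.eq_zero_or_pos n with rfl | hn
  · simp
  · rw [Nat.totient_prime_pow hp hn]
    obtain ⟨m, rfl⟩ := Nat.exists_eq_add_of_le' hn
    have := hp.two_le
    rw [Nat.add_sub_cancel, pow_succ, mul_left_comm]
    exact Nat.mul_le_mul_left _ (by omega)

/-- Above this size every modulus is non-concentrating for `k`-th powers. -/
def badBound (k : ℕ) : ℕ := if k = 2 then 1008 else (20 * k) ^ (10 * k)

lemma le_badBound {k : ℕ} (hk : 2 ≤ k) : 1008 ≤ badBound k ∧ 500 * k ≤ badBound k := by
  unfold badBound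
  split_ifs with h
  · subst h; decide
  · have h1 : (20 * k) ^ 3 ≤ (20 * k) ^ (10 * k) := Nat.pow_le_pow_right (by omega) (by omega)
    have h2 : 1008 ≤ (20 * k) ^ 3 := by
      calc 1008 ≤ 40 ^ 3 := by norm_num
        _ ≤ _ := Nat.pow_le_pow_left (by omega) 3
    have h3 : 500 * k ≤ (20 * k) ^ 3 := by
      have : (20 * k) ^ 3 = 8000 * (k * k) * k := by ring
      rw [this]
      exact Nat.mul_le_mul_right k (by nlinarith)
    omega

lemma good_of_unitary_prime_pow {k q p M : ℕ} {κ η : ℝ} (hq : q ≠ 0) (hp : p.Prime)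
    (hη : 0 ≤ η) (hM : Nat.card {x : (ZMod (p ^ q.factorization p))ˣ // x ^ k = 1} ≤ M)
    {T : ℕ} (hT : 0 < T) (hφ : T ≤ (p ^ q.factorization p).totient)
    (hb : (M : ℝ) * (4 * η + 1 / T) ≤ κ) : Good k q κ η := by
  set P := p ^ q.factorization p with hP
  have hP0 : 0 < P := pow_pos hp.pos _
  have hmul : P * (q / P) = q := Nat.ordProj_mul_ordCompl_eq_self q p
  have hco : P.Coprime (q / P) := Nat.Coprime.pow_left _ (Nat.coprime_ordCompl hp hq)
  have hpos : 0 < q / P := Nat.pos_of_ne_zero (by rintro h; rw [h] at hmul; omega)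
  rw [← hmul]
  refine Good.mul hP0 hpos hco (good_of_kernel hP0 hη hM ?_)
  have h2 : (P : ℝ) ≤ 2 * P.totient := by
    exact_mod_cast prime_pow_le_two_mul_totient hp
  have hT' : (0 : ℝ) < T := by exact_mod_cast hT
  have h3 : (1 : ℝ) ≤ 1 / T * P.totient := by
    rw [one_div_mul_eq_div, le_div_iff₀ hT', one_mul]; exact_mod_cast hφ
  calc (M : ℝ) * (2 * η * P + 1) ≤ M * (2 * η * (2 * P.totient) + 1 / T * P.totient) := by
        gcongr
    _ = M * (4 * η + 1 / T) * P.totient := by ring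
    _ ≤ κ * P.totient := by gcongr

/-- For squares the kernel on a unitary prime power has order `2` (odd prime) or at most `4`, so it
suffices that the totient of that prime power be at least `10`, respectively `16`. The moduli
without such a divisor divide `5040`; those among them exceeding `1008` are multiples of `35`. -/
lemma good_or_le_two {q : ℕ} (hq : q ≠ 0) {η : ℝ} (hη0 : 0 ≤ η) (hη : η ≤ 1 / 9000) :
    Good 2 q (13 / 50) η ∨ q ≤ 1008 := by
  by_contra! hcon
  obtain ⟨hbad, hlarge⟩ := hcon
  have hodd : ∀ p : ℕ, p.Prime → p ≠ 2 → (p ^ q.factorization p).totient < 10 := by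
    intro p hp hp2
    by_contra! h
    refine hbad (good_of_unitary_prime_pow hq hp hη0
      (card_kernel_odd_prime_pow (by norm_num) hp hp2) (T := 10) (by norm_num) h ?_)
    push_cast; linarith
  have htwo : (2 ^ q.factorization 2).totient < 16 := by
    by_contra! h
    refine hbad (good_of_unitary_prime_pow hq Nat.prime_two hη0
      (card_kernel_two_pow (by norm_num)) (T := 16) (by norm_num) h ?_)
    push_cast; linarith
  have hdvd : q ∣ 5040 := by
    rw [Nat.dvd_iff_prime_pow_dvd_dvd]
    intro p j hp hj
    refine (pow_dvd_pow p ((hp.pow_dvd_iff_le_factorization hq).1 hj)).trans ?_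
    generalize hv : q.factorization p = v at *
    rcases Nat.eq_zero_or_pos v with rfl | hv0
    · simp
    have hφ : p ^ (v - 1) * (p - 1) < if p = 2 then 16 else 10 := by
      rw [← Nat.totient_prime_pow hp hv0, ← hv]
      split_ifs with h2
      · rw [h2]; exact htwo
      · exact hodd p hp h2
    have hv1 : 1 ≤ p ^ (v - 1) := Nat.one_le_pow _ _ hp.pos
    have hp17 : p < 17 := by
      have : p - 1 ≤ p ^ (v - 1) * (p - 1) := Nat.le_mul_of_pos_left _ hv1
      split_ifs at hφ <;> omega
    have hv5 : v < 6 := by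
      by_contra! h
      have h1 : 2 ^ 5 ≤ p ^ (v - 1) :=
        (Nat.pow_le_pow_left hp.two_le 5).trans (Nat.pow_le_pow_right hp.pos (by omega))
      have h2 : p ^ (v - 1) ≤ p ^ (v - 1) * (p - 1) :=
        Nat.le_mul_of_pos_right _ (by have := hp.two_le; omega)
      split_ifs at hφ <;> omega
    clear hv hj
    interval_cases p <;> first | (exfalso; revert hp; decide) | (interval_cases v <;> revert hφ <;> decide)
  by_cases h5 : 5 ∣ q
  · by_cases h7 : 7 ∣ q
    · have h35 : 35 ∣ q := (by decide : Nat.Coprime 5 7).mul_dvd_of_dvd_of_dvd h5 h7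
      obtain ⟨m, rfl⟩ := h35
      have hm : m ∣ 144 := by
        have : 35 * m ∣ 35 * 144 := hdvd
        exact Nat.dvd_of_mul_dvd_mul_left (by norm_num) this
      have hco : Nat.Coprime 35 m := Nat.Coprime.coprime_dvd_right hm (by decide)
      refine hbad (Good.mul (by norm_num) (by omega) hco
        (good_of_kernel (by norm_num) hη0 card_kernel_thirtyFive ?_))
      rw [show Nat.totient 35 = 24 by decide]
      push_cast; linarith
    · have hco : Nat.Coprime q 7 := ((Nat.Prime.coprime_iff_not_dvd (by norm_num)).2 h7).symm
      have : q ∣ 720 := hco.dvd_of_dvd_mul_right (show q ∣ 720 * 7 from hdvd)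
      have := Nat.le_of_dvd (by norm_num) this
      omega
  · have hco : Nat.Coprime q 5 := ((Nat.Prime.coprime_iff_not_dvd (by norm_num)).2 h5).symm
    have : q ∣ 1008 := hco.dvd_of_dvd_mul_right (show q ∣ 1008 * 5 from hdvd)
    have := Nat.le_of_dvd (by norm_num) this
    omega

/-- A modulus all of whose unitary prime powers have totient less than `10 k` is a product of at most
`10 k` prime powers, each at most `20 k`. -/
lemma good_or_le_three {k q : ℕ} (hk : 3 ≤ k) (hq : q ≠ 0) {η : ℝ} (hη0 : 0 ≤ η)
    (hη : η * (4500 * k) ≤ 1) : Good k q (13 / 50) η ∨ q ≤ (20 * k) ^ (10 * k) := by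
  by_contra! hcon
  obtain ⟨hbad, hlarge⟩ := hcon
  have hk0 : (0 : ℝ) < k := by exact_mod_cast (by omega : 0 < k)
  have hsmall : ∀ p : ℕ, p.Prime → (p ^ q.factorization p).totient < 10 * k := by
    intro p hp
    by_contra! h
    refine hbad (good_of_unitary_prime_pow hq hp hη0 (M := 2 * k) ?_
      (T := 10 * k) (by omega) h ?_)
    · by_cases h2 : p = 2
      · rw [h2]; exact card_kernel_two_pow (by omega)
      · exact (card_kernel_odd_prime_pow (by omega) hp h2).trans (by omega)
    · push_cast
      have : 2 * (k : ℝ) * (4 * η + 1 / (10 * k)) = 8 * (η * k) + 1 / 5 := by field_simp; ring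
      rw [this]; nlinarith
  have hpow : ∀ p ∈ q.primeFactors, p ^ q.factorization p ≤ 20 * k := by
    intro p hp
    have hp' := Nat.prime_of_mem_primeFactors hp
    have h1 := hsmall p hp'
    have h2 := prime_pow_le_two_mul_totient (n := q.factorization p) hp'
    omega
  have hsub : q.primeFactors ⊆ Finset.Icc 1 (10 * k) := by
    intro p hp
    have hp' := Nat.prime_of_mem_primeFactors hp
    have hv : 0 < q.factorization p :=
      hp'.factorization_pos_of_dvd hq (Nat.dvd_of_mem_primeFactors hp)
    have h1 := hsmall p hp'
    rw [Nat.totient_prime_pow hp' hv] at h1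
    have h2 : p - 1 ≤ p ^ (q.factorization p - 1) * (p - 1) :=
      Nat.le_mul_of_pos_left _ (Nat.pow_pos hp'.pos)
    rw [Finset.mem_Icc]
    have := hp'.two_le
    omega
  have hcard := Finset.card_le_card hsub
  rw [Nat.card_Icc] at hcard
  have : q ≤ (20 * k) ^ q.primeFactors.card := by
    conv_lhs => rw [← Nat.prod_factorization_pow_eq_self hq]
    rw [Finsupp.prod, Nat.support_factorization]
    exact Finset.prod_le_pow_card _ _ _ hpow
  have h3 : (20 * k) ^ q.primeFactors.card ≤ (20 * k) ^ (10 * k) :=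
    Nat.pow_le_pow_right (by omega) (by omega)
  omega

/-- The moduli exceeding `badBound k` are non-concentrating: such a modulus has a large unitary
prime power divisor (or, for squares, possibly the unitary divisor `35`). -/
lemma good_or_le_badBound {k q : ℕ} (hk : 2 ≤ k) (hq : q ≠ 0) :
    Good k q (13 / 50) (1 / (9 * badBound k)) ∨ q ≤ badBound k := by
  have hB := le_badBound hk
  have hB1 : (1008 : ℝ) ≤ badBound k := by exact_mod_cast hB.1
  have hB2 : (500 : ℝ) * k ≤ badBound k := by exact_mod_cast hB.2
  have hη0 : (0 : ℝ) ≤ 1 / (9 * badBound k) := by positivity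
  by_cases h2 : k = 2
  · subst h2
    refine good_or_le_two hq hη0 ?_
    gcongr; linarith
  · have h := good_or_le_three (k := k) (q := q) (by omega) hq hη0 (by
      rw [one_div_mul_eq_div, div_le_one (by linarith)]; linarith)
    rwa [badBound, if_neg h2] at *

/-! ### Densities of near phases -/

/-- Abel summation: if the averages of `c` over all initial segments are at most `κ`, then so is its
average with respect to any non-increasing sequence of weights. -/
lemma sum_mul_le_of_antitone {ℓ c : ℕ → ℝ} (hanti : ∀ l, ℓ (l + 1) ≤ ℓ l) (hpos : ∀ l, 0 ≤ ℓ l)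
    {κ : ℝ} (hc : ∀ n : ℕ, ∑ l ∈ Finset.range n, c l ≤ κ * n) (L : ℕ) :
    ∑ l ∈ Finset.range L, ℓ l * c l ≤ κ * ∑ l ∈ Finset.range L, ℓ l := by
  have key : ∀ n : ℕ, ∑ l ∈ Finset.range n, ℓ l * (c l - κ) ≤
      ℓ n * (∑ l ∈ Finset.range n, c l - κ * n) := by
    intro n
    induction n with
    | zero => simp
    | succ n ih =>
      have h1 := hc (n + 1)
      calc ∑ l ∈ Finset.range (n + 1), ℓ l * (c l - κ)
          ≤ ℓ n * (∑ l ∈ Finset.range n, c l - κ * n) + ℓ n * (c n - κ) := by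
            rw [Finset.sum_range_succ]; gcongr
        _ = ℓ n * (∑ l ∈ Finset.range (n + 1), c l - κ * (n + 1 : ℕ)) := by
            rw [Finset.sum_range_succ]; push_cast; ring
        _ ≤ _ := mul_le_mul_of_nonpos_right (hanti n) (by linarith)
  have h2 : ℓ L * (∑ l ∈ Finset.range L, c l - κ * L) ≤ 0 :=
    mul_nonpos_of_nonneg_of_nonpos (hpos L) (by linarith [hc L])
  have h3 : ∑ l ∈ Finset.range L, ℓ l * (c l - κ) =
      ∑ l ∈ Finset.range L, ℓ l * c l - κ * ∑ l ∈ Finset.range L, ℓ l := by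
    rw [Finset.mul_sum, ← Finset.sum_sub_distrib]
    exact Finset.sum_congr rfl fun l _ => by ring
  linarith [key L]

lemma sum_filter_le_of_antitone {ℓ : ℕ → ℝ} (hanti : ∀ l, ℓ (l + 1) ≤ ℓ l) (hpos : ∀ l, 0 ≤ ℓ l)
    {κ : ℝ} (P : ℕ → Prop) [DecidablePred P]
    (hP : ∀ n : ℕ, (((Finset.range n).filter P).card : ℝ) ≤ κ * n) (L : ℕ) :
    ∑ l ∈ (Finset.range L).filter P, ℓ l ≤ κ * ∑ l ∈ Finset.range L, ℓ l := by
  have h := sum_mul_le_of_antitone (c := fun l => if P l then 1 else 0) hanti hpos (κ := κ)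
    (fun n => by simpa using hP n) L
  simpa [Finset.sum_filter] using h

open Classical in
/-- If `y` is at distance at least `1/B` from the integers, then `y + l/H`, `l = 0, 1, 2, …`, has to
travel a distance `8/(9B)` before entering an interval of length `2/(9B)` around an integer;
hence the density of visits is at most `13/50` at all times. -/
lemma prefix_density {B : ℕ} (hB : 1008 ≤ B) {y : ℝ} (hy : ∀ m : ℤ, 1 / (B : ℝ) ≤ |y - m|)
    (n : ℕ) :
    (((Finset.range n).filter
      (fun l : ℕ => Near (1 / (9 * B)) (y + (l : ℝ) / (10000 * B)))).card : ℝ) ≤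
      13 / 50 * n := by
  have hB' : (1008 : ℝ) ≤ B := by exact_mod_cast hB
  have hB0 : (0 : ℝ) < B := by linarith
  set S := (Finset.range n).filter
      (fun l : ℕ => Near (1 / (9 * B)) (y + (l : ℝ) / (10000 * B))) with hS
  have hex : ∀ l : ℕ, ∃ m : ℤ, l ∈ S → |y + (l : ℝ) / (10000 * B) - m| ≤ 1 / (9 * B) := by
    intro l
    by_cases h : l ∈ S
    · obtain ⟨m, hm⟩ := (Finset.mem_filter.1 h).2
      exact ⟨m, fun _ => hm⟩
    · exact ⟨0, fun h' => absurd h' h⟩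
  choose m hm using hex
  have hscale : ∀ l : ℕ, 10000 * (B : ℝ) * ((l : ℝ) / (10000 * B)) = l := by
    intro l; field_simp
  have hscale9 : 10000 * (B : ℝ) * (1 / (9 * B)) = 10000 / 9 := by field_simp
  rcases S.eq_empty_or_nonempty with h0 | ⟨l₀, hl₀⟩
  · rw [h0]; simp
  have hfar : (80000 : ℝ) / 9 ≤ l₀ := by
    have h1 := hm l₀ hl₀
    have h2 := hy (m l₀)
    have h3 : |y - m l₀| ≤ |y + (l₀ : ℝ) / (10000 * B) - m l₀| + (l₀ : ℝ) / (10000 * B) := by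
      have h4 := abs_sub (y + (l₀ : ℝ) / (10000 * B) - m l₀) ((l₀ : ℝ) / (10000 * B))
      rw [abs_of_nonneg (by positivity : 0 ≤ (l₀ : ℝ) / (10000 * B))] at h4
      rwa [show y + (l₀ : ℝ) / (10000 * B) - m l₀ - (l₀ : ℝ) / (10000 * B) = y - m l₀ by ring]
        at h4
    have h5 : 1 / (B : ℝ) - 1 / (9 * B) ≤ (l₀ : ℝ) / (10000 * B) := by linarith
    rw [show 1 / (B : ℝ) - 1 / (9 * B) = (80000 / 9) / (10000 * B) by field_simp; norm_num] at h5
    exact (div_le_div_iff_of_pos_right (by positivity)).1 h5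
  have hn : (80000 : ℝ) / 9 ≤ n := by
    have : l₀ < n := Finset.mem_range.1 (Finset.mem_filter.1 hl₀).1
    have : (l₀ : ℝ) ≤ n := by exact_mod_cast this.le
    linarith
  have hfib := Finset.card_le_mul_card_image (f := m) S 2223 (by
    intro b _
    have hc : (((S.filter (fun l => m l = b)).map Nat.castEmbedding : Finset ℤ).card : ℝ) ≤
        (10000 * B * (b - y) + 10000 / 9) - (10000 * B * (b - y) - 10000 / 9) + 1 := by
      refine card_le_of_mem_interval (by linarith) ?_
      intro z hz
      obtain ⟨l, hl, rfl⟩ := Finset.mem_map.1 hz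
      obtain ⟨hlS, hlb⟩ := Finset.mem_filter.1 hl
      have h1 := abs_le.1 (hm l hlS)
      rw [hlb] at h1
      have e1 := mul_le_mul_of_nonneg_left h1.1 (by positivity : 0 ≤ 10000 * (B : ℝ))
      have e2 := mul_le_mul_of_nonneg_left h1.2 (by positivity : 0 ≤ 10000 * (B : ℝ))
      rw [mul_neg, hscale9] at e1
      rw [hscale9] at e2
      have e3 : 10000 * (B : ℝ) * (y + (l : ℝ) / (10000 * B) - b) =
        l - 10000 * B * (b - y) := by
        linear_combination hscale l
      rw [e3] at e1 e2
      simp only [Nat.castEmbedding_apply, Int.cast_natCast]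
      constructor <;> linarith
    rw [Finset.card_map] at hc
    have : ((S.filter (fun l => m l = b)).card : ℝ) < 2224 := by linarith
    have : (S.filter (fun l => m l = b)).card < 2224 := by exact_mod_cast this
    omega)
  have himg : ((S.image m).card : ℝ) ≤
      (y + (n : ℝ) / (10000 * B) + 1 / (9 * B)) - (y - 1 / (9 * B)) + 1 := by
    have hp1 : 0 ≤ 1 / (9 * (B : ℝ)) := by positivity
    have hp2 : 0 ≤ (n : ℝ) / (10000 * B) := by positivity
    refine card_le_of_mem_interval (by linarith) ?_
    intro z hz
    obtain ⟨l, hl, rfl⟩ := Finset.mem_image.1 hz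
    have h1 := abs_le.1 (hm l hl)
    have hln : (l : ℝ) / (10000 * B) ≤ (n : ℝ) / (10000 * B) := by
      have : l < n := Finset.mem_range.1 (Finset.mem_filter.1 hl).1
      gcongr
    have hp3 : 0 ≤ (l : ℝ) / (10000 * B) := by positivity
    constructor <;> linarith
  have hu : 1 / (9 * (B : ℝ)) ≤ 1 / 9072 := by gcongr; linarith
  have hv : (n : ℝ) / (10000 * B) ≤ n / 10080000 := by gcongr; linarith
  calc (S.card : ℝ) ≤ 2223 * ((S.image m).card : ℝ) := by exact_mod_cast hfib
    _ ≤ 2223 * ((n : ℝ) / 10080000 + 2 / 9072 + 1) := by gcongr; linarith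
    _ ≤ 13 / 50 * n := by linarith

/-- `a r^k / q` is at distance at least `1/q` from the integers when `q > 1`. -/
lemma inv_le_abs_sub_int {k q : ℕ} (hq : 1 < q) {a : ℤ} (ha : IsCoprime a (q : ℤ)) {r : ℕ}
    (hr : r.Coprime q) (m : ℤ) : 1 / (q : ℝ) ≤ |(a : ℝ) * (r : ℝ) ^ k / q - m| := by
  have hq0 : (0 : ℝ) < q := by exact_mod_cast (by omega : 0 < q)
  have hne : a * (r : ℤ) ^ k - m * q ≠ 0 := by
    intro h
    have h1 : IsCoprime (a * (r : ℤ) ^ k) (q : ℤ) :=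
      IsCoprime.mul_left ha (IsCoprime.pow_left (Nat.isCoprime_iff_coprime.2 hr))
    have h2 : (q : ℤ) ∣ a * (r : ℤ) ^ k := ⟨m, by linarith⟩
    have h3 := h1.isUnit_of_dvd' h2 dvd_rfl
    rw [Int.isUnit_iff] at h3
    omega
  have h1 : (1 : ℝ) ≤ |(a : ℝ) * (r : ℝ) ^ k - m * q| := by
    have := Int.one_le_abs hne
    exact_mod_cast this
  have h2 : (a : ℝ) * (r : ℝ) ^ k / q - m = ((a : ℝ) * (r : ℝ) ^ k - m * q) / q := by
    field_simp
  rw [h2, abs_div, abs_of_pos hq0]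
  gcongr

/-- The total length, weighted by the number of residues for which the phase is close to an integer,
is at most `13/50` of the trivial bound. For large `q` this holds for each `l`, by non-concentration;
for small `q` it holds for each residue, by `prefix_density`. -/
lemma weighted_near_le {k q : ℕ} (hk : 2 ≤ k) (hq : 1 < q) {a : ℤ} (ha : IsCoprime a (q : ℤ))
    {ℓ : ℕ → ℝ} (hanti : ∀ l, ℓ (l + 1) ≤ ℓ l) (hpos : ∀ l, 0 ≤ ℓ l) (L : ℕ) :
    ∑ l ∈ Finset.range L, ((nearResidues k q a (1 / (9 * badBound k))
        ((l : ℝ) / (10000 * badBound k))).card : ℝ) * ℓ l ≤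
      13 / 50 * q.totient * ∑ l ∈ Finset.range L, ℓ l := by
  classical
  have hB := le_badBound hk
  rcases good_or_le_badBound (q := q) hk (by omega) with hg | hle
  · rw [Finset.mul_sum]
    refine Finset.sum_le_sum fun l _ => ?_
    have := hpos l
    gcongr
    exact hg a ha _
  · set B := badBound k
    have h1 : ∀ l ∈ Finset.range L, ((nearResidues k q a (1 / (9 * B))
        ((l : ℝ) / (10000 * B))).card : ℝ) * ℓ l =
        ∑ r ∈ (Finset.range q).filter (fun r => q.Coprime r),
          if Near (1 / (9 * B)) ((a : ℝ) * (r : ℝ) ^ k / q + (l : ℝ) / (10000 * B))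
            then ℓ l else 0 := by
      intro l _
      rw [← Finset.sum_filter, Finset.sum_const, nsmul_eq_mul, Finset.filter_filter]
      simp only [nearResidues, Nat.coprime_comm]
    rw [Finset.sum_congr rfl h1, Finset.sum_comm]
    have h2 : ∀ r ∈ (Finset.range q).filter (fun r => q.Coprime r),
        (∑ l ∈ Finset.range L,
          if Near (1 / (9 * B)) ((a : ℝ) * (r : ℝ) ^ k / q + (l : ℝ) / (10000 * B))
            then ℓ l else 0) ≤ 13 / 50 * ∑ l ∈ Finset.range L, ℓ l := by
      intro r hr
      rw [← Finset.sum_filter]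
      refine sum_filter_le_of_antitone hanti hpos _ (fun n => ?_) L
      refine prefix_density hB.1 (fun m => ?_) n
      refine le_trans ?_ (inv_le_abs_sub_int hq ha (Finset.mem_filter.1 hr).2.symm m)
      have hq0 : (0 : ℝ) < q := by exact_mod_cast (by omega : 0 < q)
      have : (q : ℝ) ≤ B := by exact_mod_cast hle
      gcongr
    refine (Finset.sum_le_sum h2).trans (le_of_eq ?_)
    rw [Finset.sum_const, nsmul_eq_mul, ← Nat.totient_eq_card_coprime]
    ring

/-! ### Primes whose phase is near an integer -/

/-- Breakpoints `t_l = min(Y, (l/b)^{1/k})`, between which `b t^k` increases by `1`. -/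
noncomputable def breakpoint (k : ℕ) (b Y : ℝ) (l : ℕ) : ℝ := min Y (((l : ℝ) / b) ^ (1 / (k : ℝ)))

lemma breakpoint_mono {k : ℕ} {b Y : ℝ} (hb : 0 < b) (l : ℕ) :
    breakpoint k b Y l ≤ breakpoint k b Y (l + 1) := by
  unfold breakpoint
  apply min_le_min le_rfl
  apply Real.rpow_le_rpow (by positivity) _ (by positivity)
  push_cast
  gcongr
  linarith

lemma breakpoint_nonneg {k : ℕ} {b Y : ℝ} (hb : 0 < b) (hY : 0 ≤ Y) (l : ℕ) :
    0 ≤ breakpoint k b Y l := le_min hY (by positivity)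

/-- The gaps between breakpoints decrease, by concavity of `t ↦ t^{1/k}`. -/
lemma breakpoint_concave {k : ℕ} (hk : 1 ≤ k) {b Y : ℝ} (hb : 0 < b) (l : ℕ) :
    breakpoint k b Y (l + 2) - breakpoint k b Y (l + 1) ≤
      breakpoint k b Y (l + 1) - breakpoint k b Y l := by
  have hk' : (1 : ℝ) ≤ k := by exact_mod_cast hk
  set T : ℕ → ℝ := fun l => ((l : ℝ) / b) ^ (1 / (k : ℝ)) with hT
  have hconc : T (l + 2) + T l ≤ 2 * T (l + 1) := by
    have hc := Real.concaveOn_rpow (p := 1 / (k : ℝ)) (by positivity)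
      (by rw [div_le_one (by linarith)]; exact hk')
    have h := hc.2 (Set.mem_Ici.2 (by positivity : 0 ≤ (l : ℝ) / b))
      (Set.mem_Ici.2 (by positivity : 0 ≤ ((l : ℝ) + 2) / b))
      (by norm_num : (0 : ℝ) ≤ 1 / 2) (by norm_num : (0 : ℝ) ≤ 1 / 2) (by norm_num)
    simp only [smul_eq_mul] at h
    rw [show 1 / 2 * ((l : ℝ) / b) + 1 / 2 * (((l : ℝ) + 2) / b) = ((l : ℝ) + 1) / b by ring] at h
    simp only [hT]
    push_cast
    linarith
  change min Y (T (l + 2)) - min Y (T (l + 1)) ≤ min Y (T (l + 1)) - min Y (T l)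
  have h1 := min_le_left Y (T (l + 2))
  have h2 := min_le_right Y (T (l + 2))
  have h3 := min_le_left Y (T l)
  have h4 := min_le_right Y (T l)
  rcases min_cases Y (T (l + 1)) with ⟨h, _⟩ | ⟨h, _⟩ <;> rw [h] <;> linarith

open Classical in
/-- The primes `p ≤ Y` with `p > R`, `p ∤ q` whose phase `a p^k/q + β p^k` is within `η` of an
integer. -/
noncomputable def nearPrimes (k q R : ℕ) (a : ℤ) (β Y η : ℝ) : Finset ℕ :=
  (Finset.Icc 1 ⌊Y⌋₊).filter fun p => p.Prime ∧ R < p ∧ ¬ p ∣ q ∧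
    Near η ((a : ℝ) * (p : ℝ) ^ k / q + β * (p : ℝ) ^ k)

lemma mem_nearPrimes {k q R : ℕ} {a : ℤ} {β Y η : ℝ} {p : ℕ} :
    p ∈ nearPrimes k q R a β Y η ↔ (1 ≤ p ∧ p ≤ ⌊Y⌋₊) ∧ p.Prime ∧ R < p ∧ ¬ p ∣ q ∧
      Near η ((a : ℝ) * (p : ℝ) ^ k / q + β * (p : ℝ) ^ k) := by
  simp [nearPrimes]

/-- Between consecutive breakpoints the phase `β p ^ k` is constant up to `1/(10⁴ B)`, so the near
primes there lie in the residue classes counted by `nearResidues`, to each of which the sieve bound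
applies. -/
lemma card_nearPrimes_le_of_pos {k q R : ℕ} (hk : 2 ≤ k) (hq : 1 < q) (hR : 2 ≤ R) {a : ℤ}
    (ha : IsCoprime a (q : ℤ)) {β Y η : ℝ} (hβ : 0 < β) (hY : 1 ≤ Y)
    (hη : η + 1 / (10000 * badBound k) ≤ 1 / (9 * badBound k)) :
    ((nearPrimes k q R a β Y η).card : ℝ) ≤ 13 / 50 * Y / Real.log R +
      2 * (⌈10000 * badBound k * β * Y ^ k⌉₊ * q * R ^ 2) := by
  classical
  have hB := le_badBound hk
  set B := badBound k with hBdef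
  have hB0 : (0 : ℝ) < B := by exact_mod_cast (by omega : 0 < B)
  set b : ℝ := 10000 * B * β with hb
  have hb0 : 0 < b := by positivity
  set L : ℕ := ⌈b * Y ^ k⌉₊ with hL
  set t := breakpoint k b Y with ht
  have hkR : (0 : ℝ) < k := by exact_mod_cast (by omega : 0 < k)
  have hlogR : 0 < Real.log R := Real.log_pos (by exact_mod_cast hR)
  have hφ : 0 < (q.totient : ℝ) := by exact_mod_cast Nat.totient_pos.2 (by omega)
  -- the near primes between consecutive breakpoints lie in few residue classes
  have hsub : nearPrimes k q R a β Y η ⊆ (Finset.range L).biUnion fun l =>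
      (nearResidues k q a (1 / (9 * B)) ((l : ℝ) / (10000 * B))).biUnion fun r =>
        (Finset.Ioc ⌊t l⌋₊ ⌊t (l + 1)⌋₊).filter fun p => p.Prime ∧ R < p ∧ p ≡ r [MOD q] := by
    intro p hp
    obtain ⟨⟨hp1, hpY⟩, hpp, hpR, hpq, hn⟩ := mem_nearPrimes.1 hp
    have hpY' : (p : ℝ) ≤ Y := (Nat.le_floor_iff (by linarith)).1 hpY
    have hp0 : (0 : ℝ) < p := by exact_mod_cast hpp.pos
    have hbp : 0 < b * (p : ℝ) ^ k := by positivity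
    have hroot : ∀ x : ℝ, 0 ≤ x → (x ^ k) ^ (1 / (k : ℝ)) = x := by
      intro x hx
      rw [one_div, Real.pow_rpow_inv_natCast hx (by omega)]
    obtain ⟨l, hl⟩ : ∃ l, ⌈b * (p : ℝ) ^ k⌉₊ = l + 1 :=
      Nat.exists_eq_succ_of_ne_zero (Nat.ceil_pos.2 hbp).ne'
    have hl1 : (l : ℝ) < b * (p : ℝ) ^ k := by
      rw [← Nat.lt_ceil]; omega
    have hl2 : b * (p : ℝ) ^ k ≤ (l : ℝ) + 1 := by
      have := Nat.le_ceil (b * (p : ℝ) ^ k)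
      rw [hl] at this; exact_mod_cast this
    have hlL : l < L := by
      rw [hL, Nat.lt_ceil]
      refine hl1.trans_le ?_
      gcongr
    rw [Finset.mem_biUnion]
    refine ⟨l, Finset.mem_range.2 hlL, ?_⟩
    rw [Finset.mem_biUnion]
    refine ⟨p % q, ?_, ?_⟩
    · rw [mem_nearResidues]
      refine ⟨Nat.mod_lt _ (by omega), ?_, ?_⟩
      · have : Nat.Coprime q p := ((Nat.Prime.coprime_iff_not_dvd hpp).2 hpq).symm
        rwa [Nat.Coprime, ← Nat.gcd_rec]
      · have hq0 : (q : ℝ) ≠ 0 := by exact_mod_cast (by omega : q ≠ 0)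
        have e1 : ((p % q : ℕ) : ℤ) ^ k ≡ (p : ℤ) ^ k [ZMOD q] := by
          apply Int.ModEq.pow
          push_cast
          exact Int.mod_modEq _ _
        obtain ⟨c, hc⟩ := e1.dvd
        generalize p % q = r at hc ⊢
        have hc' : (p : ℝ) ^ k = (r : ℝ) ^ k + q * c := by
          have : (p : ℤ) ^ k = (r : ℤ) ^ k + q * c := by linarith
          have := congrArg (fun x : ℤ => (x : ℝ)) this
          push_cast at this
          exact_mod_cast this
        have hpert : |((a : ℝ) * (p : ℝ) ^ k / q + (l : ℝ) / (10000 * B)) -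
            ((a : ℝ) * (p : ℝ) ^ k / q + β * (p : ℝ) ^ k)| ≤ 1 / (10000 * B) := by
          have h1 : β * (p : ℝ) ^ k = b * (p : ℝ) ^ k / (10000 * B) := by
            rw [hb]; field_simp
          rw [h1, add_sub_add_left_eq_sub, ← sub_div, abs_div,
            abs_of_pos (by positivity : (0 : ℝ) < 10000 * B)]
          gcongr
          rw [abs_le]; constructor <;> linarith
        have hn2 := (hn.perturb hpert).add_int (-(a * c))
          (y := (a : ℝ) * (r : ℝ) ^ k / q + (l : ℝ) / (10000 * B)) (by
            rw [hc']; push_cast; field_simp; ring)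
        obtain ⟨m, hm⟩ := hn2
        exact ⟨m, hm.trans hη⟩
    · rw [Finset.mem_filter, Finset.mem_Ioc]
      refine ⟨⟨?_, ?_⟩, hpp, hpR, (Nat.mod_modEq p q).symm⟩
      · rw [Nat.floor_lt (breakpoint_nonneg hb0 (by linarith) l)]
        refine (min_le_right _ _).trans_lt ?_
        conv_rhs => rw [← hroot p hp0.le]
        apply Real.rpow_lt_rpow (by positivity) _ (by positivity)
        rw [div_lt_iff₀ hb0]; linarith
      · rw [Nat.le_floor_iff (breakpoint_nonneg hb0 (by linarith) _)]
        refine le_min hpY' ?_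
        conv_lhs => rw [← hroot p hp0.le]
        apply Real.rpow_le_rpow (by positivity) _ (by positivity)
        rw [le_div_iff₀ hb0]; push_cast; linarith
  set D : ℕ → ℝ := fun l => t (l + 1) - t l with hD
  have hDpos : ∀ l, 0 ≤ D l := fun l => sub_nonneg.2 (breakpoint_mono hb0 l)
  have hDanti : ∀ l, D (l + 1) ≤ D l := fun l => breakpoint_concave (by omega) hb0 l
  have hDsum : ∑ l ∈ Finset.range L, D l ≤ Y := by
    rw [Finset.sum_range_sub]
    have h1 : t L ≤ Y := min_le_left _ _
    have h2 : 0 ≤ t 0 := breakpoint_nonneg hb0 (by linarith) 0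
    linarith
  have hR2 : (4 : ℝ) ≤ (R : ℝ) ^ 2 := by
    have : (2 : ℝ) ≤ R := by exact_mod_cast hR
    nlinarith
  -- the sieve bound on each piece
  have hpiece : ∀ l r : ℕ, (((Finset.Ioc ⌊t l⌋₊ ⌊t (l + 1)⌋₊).filter
      fun p => p.Prime ∧ R < p ∧ p ≡ r [MOD q]).card : ℝ) ≤
      D l / (q.totient * Real.log R) + 2 * (R : ℝ) ^ 2 := by
    intro l r
    have hmono : ⌊t l⌋₊ ≤ ⌊t (l + 1)⌋₊ := Nat.floor_le_floor (breakpoint_mono hb0 l)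
    refine (brun_titchmarsh (r := r) (by omega) hR hmono).trans ?_
    have h1 : (⌊t (l + 1)⌋₊ : ℝ) - ⌊t l⌋₊ ≤ D l + 1 := by
      have e1 := Nat.floor_le (breakpoint_nonneg (k := k) (Y := Y) hb0 (by linarith) (l + 1))
      have e2 := Nat.lt_floor_add_one (t l)
      simp only [hD]
      linarith
    have h2 : 1 / ((q.totient : ℝ) * Real.log R) ≤ 2 := by
      have e1 : (1 : ℝ) ≤ q.totient := by exact_mod_cast Nat.totient_pos.2 (by omega)
      have e2 : (1 : ℝ) / 2 ≤ Real.log R :=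
        (by linarith [Real.log_two_gt_d9] : (1 : ℝ) / 2 ≤ Real.log 2).trans
          (Real.log_le_log (by norm_num) (by exact_mod_cast hR))
      rw [div_le_iff₀ (by positivity)]
      nlinarith
    calc _ ≤ (D l + 1) / (q.totient * Real.log R) + (R : ℝ) ^ 2 := by gcongr
      _ = D l / (q.totient * Real.log R) + 1 / (q.totient * Real.log R) + (R : ℝ) ^ 2 := by ring
      _ ≤ _ := by linarith
  have hcardnear : ∀ y : ℝ, (nearResidues k q a (1 / (9 * B)) y).card ≤ q := fun y =>
    (Finset.card_filter_le _ _).trans (Finset.card_range q).le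
  calc ((nearPrimes k q R a β Y η).card : ℝ)
      ≤ ∑ l ∈ Finset.range L, ∑ r ∈ nearResidues k q a (1 / (9 * B)) ((l : ℝ) / (10000 * B)),
        (((Finset.Ioc ⌊t l⌋₊ ⌊t (l + 1)⌋₊).filter
          fun p => p.Prime ∧ R < p ∧ p ≡ r [MOD q]).card : ℝ) := by
        have h := (Finset.card_le_card hsub).trans (Finset.card_biUnion_le.trans
          (Finset.sum_le_sum fun l _ => Finset.card_biUnion_le))
        exact_mod_cast h
    _ ≤ ∑ l ∈ Finset.range L, ∑ r ∈ nearResidues k q a (1 / (9 * B)) ((l : ℝ) / (10000 * B)),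
        (D l / (q.totient * Real.log R) + 2 * (R : ℝ) ^ 2) :=
        Finset.sum_le_sum fun l _ => Finset.sum_le_sum fun r _ => hpiece l r
    _ = 1 / (q.totient * Real.log R) * ∑ l ∈ Finset.range L,
          ((nearResidues k q a (1 / (9 * B)) ((l : ℝ) / (10000 * B))).card : ℝ) * D l +
        ∑ l ∈ Finset.range L,
          ((nearResidues k q a (1 / (9 * B)) ((l : ℝ) / (10000 * B))).card : ℝ) *
            (2 * (R : ℝ) ^ 2) := by
        rw [Finset.mul_sum, ← Finset.sum_add_distrib]
        refine Finset.sum_congr rfl fun l _ => ?_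
        rw [Finset.sum_const, nsmul_eq_mul]
        ring
    _ ≤ 1 / (q.totient * Real.log R) * (13 / 50 * q.totient * Y) +
        ∑ l ∈ Finset.range L, (q : ℝ) * (2 * (R : ℝ) ^ 2) := by
        have hw := weighted_near_le hk hq ha hDanti hDpos L
        gcongr
        · refine hw.trans ?_
          gcongr
        · exact hcardnear _
    _ = _ := by
        rw [Finset.sum_const, nsmul_eq_mul, Finset.card_range]
        field_simp

/-- **Near primes are few.** The sign of `β` is immaterial, and a tiny `β` may be replaced by
`1/(10⁴ B Y ^ k)` at the cost of a small perturbation of the phases. -/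
lemma card_nearPrimes_le {k q R : ℕ} (hk : 2 ≤ k) (hq : 1 < q) (hR : 2 ≤ R) {a : ℤ}
    (ha : IsCoprime a (q : ℤ)) {β Y : ℝ} (hY : 1 ≤ Y) :
    ((nearPrimes k q R a β Y (1 / (12 * badBound k))).card : ℝ) ≤ 13 / 50 * Y / Real.log R +
      2 * ((10000 * badBound k * (|β| * Y ^ k) + 2) * q * R ^ 2) := by
  have hB := le_badBound hk
  set B := badBound k with hBdef
  have hB0 : (0 : ℝ) < B := by exact_mod_cast (by omega : 0 < B)
  have hYk : 0 < Y ^ k := by positivity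
  have hηle : 1 / (12 * (B : ℝ)) + 1 / (10000 * B) + 1 / (10000 * B) ≤ 1 / (9 * B) := by
    rw [show 1 / (12 * (B : ℝ)) + 1 / (10000 * B) + 1 / (10000 * B) =
      (1 / 12 + 1 / 10000 + 1 / 10000) / B by field_simp,
      show 1 / (9 * (B : ℝ)) = (1 / 9) / B by field_simp]
    gcongr
    norm_num
  -- reduction to `β ≥ 0`
  wlog hβ : 0 ≤ β generalizing a β with H
  · have h := H (a := -a) (β := -β) ha.neg_left (by linarith)
    rw [abs_neg] at h
    convert h using 3
    ext p
    simp only [mem_nearPrimes]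
    have e : ((-a : ℤ) : ℝ) * (p : ℝ) ^ k / q + -β * (p : ℝ) ^ k =
        -((a : ℝ) * (p : ℝ) ^ k / q + β * (p : ℝ) ^ k) := by push_cast; ring
    rw [e]
    have e2 : Near (1 / (12 * (B : ℝ))) ((a : ℝ) * (p : ℝ) ^ k / q + β * (p : ℝ) ^ k) ↔
        Near (1 / (12 * (B : ℝ))) (-((a : ℝ) * (p : ℝ) ^ k / q + β * (p : ℝ) ^ k)) :=
      ⟨Near.neg, fun h => by simpa using h.neg⟩
    rw [e2]
  rw [abs_of_nonneg hβ]
  have key : ∀ γ : ℝ, 0 < γ → |γ - β| * Y ^ k ≤ 1 / (10000 * B) →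
      10000 * B * γ * Y ^ k ≤ 10000 * B * (β * Y ^ k) + 1 →
      ((nearPrimes k q R a β Y (1 / (12 * B))).card : ℝ) ≤ 13 / 50 * Y / Real.log R +
      2 * ((10000 * B * (β * Y ^ k) + 2) * q * R ^ 2) := by
    intro γ hγ hγβ hγY
    have hsub : nearPrimes k q R a β Y (1 / (12 * B)) ⊆
        nearPrimes k q R a γ Y (1 / (12 * B) + 1 / (10000 * B)) := by
      intro p hp
      rw [mem_nearPrimes] at hp ⊢
      refine ⟨hp.1, hp.2.1, hp.2.2.1, hp.2.2.2.1, hp.2.2.2.2.perturb ?_⟩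
      have hpY : (p : ℝ) ≤ Y := (Nat.le_floor_iff (by linarith)).1 hp.1.2
      rw [add_sub_add_left_eq_sub, ← sub_mul, abs_mul,
        abs_of_nonneg (by positivity : 0 ≤ (p : ℝ) ^ k)]
      refine le_trans ?_ hγβ
      gcongr
    have h1 := card_nearPrimes_le_of_pos (R := R) hk hq hR ha hγ hY hηle
    have h2 : ((nearPrimes k q R a β Y (1 / (12 * B))).card : ℝ) ≤
        ((nearPrimes k q R a γ Y (1 / (12 * B) + 1 / (10000 * B))).card : ℝ) := by
      exact_mod_cast Finset.card_le_card hsub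
    have h3 : (⌈10000 * B * γ * Y ^ k⌉₊ : ℝ) ≤ 10000 * B * (β * Y ^ k) + 2 := by
      have := Nat.ceil_lt_add_one (by positivity : 0 ≤ 10000 * B * γ * Y ^ k)
      linarith
    refine (h2.trans h1).trans ?_
    gcongr
  have hone : 10000 * (B : ℝ) * (1 / (10000 * B * Y ^ k)) * Y ^ k = 1 := by field_simp
  rcases le_total β (1 / (10000 * B * Y ^ k)) with h | h
  · refine key (1 / (10000 * B * Y ^ k)) (by positivity) ?_ ?_
    · rw [abs_of_nonneg (by linarith)]
      calc (1 / (10000 * B * Y ^ k) - β) * Y ^ k ≤ 1 / (10000 * B * Y ^ k) * Y ^ k := by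
            gcongr; linarith
        _ = _ := by field_simp
    · rw [hone]
      have : 0 ≤ 10000 * (B : ℝ) * (β * Y ^ k) := by positivity
      linarith
  · have hpos : 0 < β := lt_of_lt_of_le (by positivity) h
    refine key β hpos ?_ ?_
    · simp
    · linarith

/-! ### The double series and its real part -/

/-- The terms of the double series for `Φ(ρ)`. -/
noncomputable def phiTerm (k : ℕ) (ρ : ℝ) (x : ℕ+ × Nat.Primes) : ℝ :=
  ρ ^ ((x.1 : ℕ) * (x.2 : ℕ) ^ k) / (x.1 : ℕ)

lemma phiTerm_nonneg {k : ℕ} {ρ : ℝ} (hρ : 0 ≤ ρ) (x : ℕ+ × Nat.Primes) : 0 ≤ phiTerm k ρ x := by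
  unfold phiTerm; positivity

lemma summable_phiTerm {k : ℕ} (hk : 1 ≤ k) {ρ : ℝ} (hρ : 0 ≤ ρ) (hρ1 : ρ < 1) :
    Summable (phiTerm k ρ) := by
  have h1 : Summable fun j : ℕ+ => ρ ^ ((j : ℕ) - 1) :=
    (summable_geometric_of_lt_one hρ hρ1).comp_injective (i := fun j : ℕ+ => (j : ℕ) - 1) (by
      intro a b h
      have ha := a.pos
      have hb := b.pos
      exact PNat.eq (by simp only at h; omega))
  have h2 : Summable fun p : Nat.Primes => ρ ^ (p : ℕ) :=
    (summable_geometric_of_lt_one hρ hρ1).comp_injective (i := fun p : Nat.Primes => (p : ℕ))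
      Subtype.val_injective
  refine Summable.of_nonneg_of_le (phiTerm_nonneg hρ) ?_
    (h1.mul_of_nonneg h2 (fun _ => by positivity) (fun _ => by positivity))
  rintro ⟨j, p⟩
  unfold phiTerm
  dsimp only
  have hj : 1 ≤ (j : ℕ) := j.pos
  have hp : (p : ℕ) ≤ (p : ℕ) ^ k := Nat.le_self_pow (by omega) _
  have hp1 : 1 ≤ (p : ℕ) := p.2.one_lt.le
  calc ρ ^ ((j : ℕ) * (p : ℕ) ^ k) / (j : ℕ) ≤ ρ ^ ((j : ℕ) * (p : ℕ) ^ k) :=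
        div_le_self (by positivity) (by exact_mod_cast hj)
    _ ≤ ρ ^ (((j : ℕ) - 1) + (p : ℕ)) := by
        apply pow_le_pow_of_le_one hρ hρ1.le
        obtain ⟨i, hi⟩ := Nat.exists_eq_add_of_le' hj
        rw [hi, Nat.add_sub_cancel]
        nlinarith
    _ = _ := pow_add _ _ _

lemma phiR_eq_tsum {k : ℕ} (hk : 1 ≤ k) {ρ : ℝ} (hρ : 0 ≤ ρ) (hρ1 : ρ < 1) :
    PhiR k ρ = ∑' x, phiTerm k ρ x :=
  ((summable_phiTerm hk hρ hρ1).tsum_prod).symm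

lemma re_phiC_eq_tsum {k : ℕ} (hk : 1 ≤ k) {ρ : ℝ} (hρ : 0 ≤ ρ) (hρ1 : ρ < 1) (α : ℝ) :
    (PhiC k ((ρ : ℂ) * eTheta α)).re =
      ∑' x : ℕ+ × Nat.Primes, phiTerm k ρ x *
        Real.cos (2 * Real.pi * ((x.1 : ℕ) * (α * (x.2 : ℕ) ^ k))) := by
  set g : ℕ+ × Nat.Primes → ℂ := fun x =>
    ((ρ : ℂ) * eTheta α) ^ ((x.1 : ℕ) * (x.2 : ℕ) ^ k) / ((x.1 : ℕ) : ℂ) with hg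
  have hform : ∀ x, g x = (phiTerm k ρ x : ℂ) *
      Complex.exp ((2 * Real.pi * ((x.1 : ℕ) * (α * (x.2 : ℕ) ^ k)) : ℝ) * Complex.I) := by
    intro x
    simp only [hg, phiTerm, eTheta, mul_pow, ← Complex.exp_nat_mul]
    rw [show ((((x.1 : ℕ) * (x.2 : ℕ) ^ k : ℕ) : ℂ) * (2 * Real.pi * Complex.I * α)) =
      ((2 * Real.pi * ((x.1 : ℕ) * (α * (x.2 : ℕ) ^ k)) : ℝ) * Complex.I) by push_cast; ring]
    push_cast
    ring
  have hnorm : ∀ x, ‖g x‖ = phiTerm k ρ x := by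
    intro x
    rw [hform, norm_mul, Complex.norm_exp_ofReal_mul_I, mul_one, Complex.norm_real,
      Real.norm_of_nonneg (phiTerm_nonneg hρ x)]
  have hsum : Summable g := by
    refine Summable.of_norm ?_
    simp only [hnorm]
    exact summable_phiTerm hk hρ hρ1
  have h1 : PhiC k ((ρ : ℂ) * eTheta α) = ∑' x, g x := (hsum.tsum_prod).symm
  rw [h1, Complex.re_tsum hsum]
  refine tsum_congr fun x => ?_
  rw [hform, Complex.re_ofReal_mul, Complex.exp_ofReal_mul_I_re]

lemma summable_phiTerm_mul_cos {k : ℕ} (hk : 1 ≤ k) {ρ : ℝ} (hρ : 0 ≤ ρ) (hρ1 : ρ < 1)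
    (θ : ℕ+ × Nat.Primes → ℝ) : Summable fun x => phiTerm k ρ x * Real.cos (θ x) := by
  refine Summable.of_norm_bounded (summable_phiTerm hk hρ hρ1) fun x => ?_
  rw [norm_mul, Real.norm_of_nonneg (phiTerm_nonneg hρ x)]
  exact mul_le_of_le_one_right (phiTerm_nonneg hρ x) (Real.abs_cos_le_one _)

/-- Upper bound for `Re Φ`, keeping only the `j = 1` terms of the saving. -/
lemma re_phiC_le {k : ℕ} (hk : 1 ≤ k) {ρ : ℝ} (hρ : 0 ≤ ρ) (hρ1 : ρ < 1) (α : ℝ)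
    (F : Finset Nat.Primes) :
    (PhiC k ((ρ : ℂ) * eTheta α)).re ≤ PhiR k ρ -
      ∑ p ∈ F, ρ ^ ((p : ℕ) ^ k) * (1 - Real.cos (2 * Real.pi * (α * (p : ℕ) ^ k))) := by
  have hs := summable_phiTerm hk hρ hρ1
  have hc := summable_phiTerm_mul_cos hk hρ hρ1
    (fun x => 2 * Real.pi * ((x.1 : ℕ) * (α * (x.2 : ℕ) ^ k)))
  rw [re_phiC_eq_tsum hk hρ hρ1, phiR_eq_tsum hk hρ hρ1, le_sub_comm, ← hs.tsum_sub hc]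
  have hinj : Function.Injective (fun p : Nat.Primes => ((1 : ℕ+), p)) := by
    intro p p' h; exact (Prod.ext_iff.1 h).2
  refine le_trans (le_of_eq ?_) ((hs.sub hc).sum_le_tsum (F.map ⟨_, hinj⟩) fun x _ => ?_)
  · rw [Finset.sum_map]
    refine Finset.sum_congr rfl fun p _ => ?_
    simp only [phiTerm, Function.Embedding.coeFn_mk, PNat.one_coe, one_mul, Nat.cast_one, div_one]
    ring
  · rw [← mul_one_sub]
    have := Real.cos_le_one (2 * Real.pi * ((x.1 : ℕ) * (α * (x.2 : ℕ) ^ k)))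
    exact mul_nonneg (phiTerm_nonneg hρ x) (by linarith)

/-- Lower bound for `Re Φ`: the `j = 1` and `j = 2` terms cannot both be close to `-1`. -/
lemma neg_re_phiC_le {k : ℕ} (hk : 1 ≤ k) {ρ : ℝ} (hρ : 0 ≤ ρ) (hρ1 : ρ < 1) (α : ℝ)
    (F : Finset Nat.Primes) :
    -(PhiC k ((ρ : ℂ) * eTheta α)).re ≤ PhiR k ρ - ∑ p ∈ F, (ρ ^ ((p : ℕ) ^ k)) ^ 2 / 4 := by
  have hs := summable_phiTerm hk hρ hρ1
  have hc := summable_phiTerm_mul_cos hk hρ hρ1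
    (fun x => 2 * Real.pi * ((x.1 : ℕ) * (α * (x.2 : ℕ) ^ k)))
  rw [re_phiC_eq_tsum hk hρ hρ1, phiR_eq_tsum hk hρ hρ1, le_sub_comm, sub_neg_eq_add,
    ← hs.tsum_add hc]
  refine le_trans ?_ ((hs.add hc).sum_le_tsum (({1, 2} : Finset ℕ+) ×ˢ F) fun x _ => ?_)
  · rw [Finset.sum_product_right]
    refine Finset.sum_le_sum fun p _ => ?_
    rw [Finset.sum_pair (by decide)]
    simp only [phiTerm, PNat.one_coe, one_mul, Nat.cast_one, div_one]
    have e2 : (((2 : ℕ+) : ℕ)) = 2 := rfl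
    rw [e2]
    set u := ρ ^ ((p : ℕ) ^ k)
    have hu0 : 0 ≤ u := by positivity
    have hu1 : u ≤ 1 := pow_le_one₀ hρ hρ1.le
    rw [show ρ ^ (2 * (p : ℕ) ^ k) = u ^ 2 by rw [mul_comm, pow_mul]]
    rw [show 2 * Real.pi * (((2 : ℕ) : ℝ) * (α * (p : ℕ) ^ k)) =
      2 * (2 * Real.pi * (α * (p : ℕ) ^ k)) by push_cast; ring, Real.cos_two_mul]
    set c := Real.cos (2 * Real.pi * (α * (p : ℕ) ^ k))
    have hc1 : -1 ≤ c := Real.neg_one_le_cos _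
    push_cast
    -- `u (1 + c) + u² c² ≥ u² (1 + c + c²) ≥ u² / 4`
    nlinarith [mul_nonneg (mul_nonneg hu0 (sub_nonneg.2 hu1)) (by linarith : 0 ≤ 1 + c),
      mul_nonneg (sq_nonneg u) (sq_nonneg (c + 1 / 2)), sq_nonneg u]
  · rw [← mul_one_add]
    have := Real.neg_one_le_cos (2 * Real.pi * ((x.1 : ℕ) * (α * (x.2 : ℕ) ^ k)))
    exact mul_nonneg (phiTerm_nonneg hρ x) (by linarith)

/-! ### Chebyshev's upper bound for the series -/

/-- Bernoulli's inequality, exponentiated: a comparison with a geometric progression. -/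
lemma exp_neg_pow_le (k : ℕ) {t : ℝ} (ht : 0 ≤ t) :
    Real.exp (-t ^ k) ≤ Real.exp (k - 1) * Real.exp (-(k * t)) := by
  rw [← Real.exp_add]
  apply Real.exp_le_exp.2
  have h := one_add_mul_le_pow (a := t - 1) (by linarith) k
  rw [show 1 + (t - 1) = t by ring] at h
  linarith

lemma sum_exp_neg_pow_le {k : ℕ} (hk : 1 ≤ k) {Z : ℝ} (hZ : 0 < Z) (N : ℕ) :
    ∑ l ∈ Finset.range N, Real.exp (-(((l + 1 : ℕ) : ℝ) / Z) ^ k) ≤ Real.exp (k - 1) / k * Z := by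
  have hk0 : (0 : ℝ) < k := by exact_mod_cast hk
  set r := Real.exp (-(k / Z)) with hr
  have hr0 : 0 < r := Real.exp_pos _
  have hr1 : r < 1 := Real.exp_lt_one_iff.2 (neg_neg_of_pos (by positivity))
  have h1 : ∀ l : ℕ, Real.exp (-(((l + 1 : ℕ) : ℝ) / Z) ^ k) ≤ Real.exp (k - 1) * (r * r ^ l) := by
    intro l
    refine (exp_neg_pow_le k (by positivity)).trans (le_of_eq ?_)
    congr 1
    rw [hr, ← pow_succ', ← Real.exp_nat_mul]
    congr 1
    push_cast
    ring
  refine (Finset.sum_le_sum fun l _ => h1 l).trans ?_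
  rw [← Finset.mul_sum, ← Finset.mul_sum, div_mul_eq_mul_div, mul_div_assoc]
  refine mul_le_mul_of_nonneg_left ?_ (Real.exp_pos _).le
  have h2 : ∑ l ∈ Finset.range N, r ^ l ≤ (1 - r)⁻¹ := by
    rw [← tsum_geometric_of_lt_one hr0.le hr1]
    exact (summable_geometric_of_lt_one hr0.le hr1).sum_le_tsum _ fun _ _ => by positivity
  refine (mul_le_mul_of_nonneg_left h2 hr0.le).trans ?_
  rw [← div_eq_mul_inv, div_le_div_iff₀ (by linarith) hk0]
  have h3 : k / Z + 1 ≤ r⁻¹ := by rw [hr, Real.exp_neg, inv_inv]; exact Real.add_one_le_exp _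
  have h4 : (k / Z + 1) * r ≤ 1 := by
    calc (k / Z + 1) * r ≤ r⁻¹ * r := mul_le_mul_of_nonneg_right h3 hr0.le
      _ = 1 := inv_mul_cancel₀ hr0.ne'
  have h5 : k * r + Z * r ≤ Z := by
    calc k * r + Z * r = Z * ((k / Z + 1) * r) := by field_simp
      _ ≤ Z * 1 := mul_le_mul_of_nonneg_left h4 hZ.le
      _ = Z := mul_one _
  linarith

/-- Chebyshev's upper bound, with the primes of an interval weighted by a non-increasing sequence.
The primes up to `√Y` are estimated trivially. -/
lemma sum_prime_le {ℓ : ℕ → ℝ} (hanti : ∀ l, ℓ (l + 1) ≤ ℓ l) (hpos : ∀ l, 0 ≤ ℓ l)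
    {Y : ℝ} (hY : 1 < Y) (N : ℕ) :
    ∑ l ∈ (Finset.range N).filter (fun l => (l + 1).Prime), ℓ l ≤
      √Y * ℓ 0 + 2 * Real.log 4 / Real.log Y * ∑ l ∈ Finset.range N, ℓ l := by
  have hlogY : 0 < Real.log Y := Real.log_pos hY
  set c : ℕ → ℝ := fun l => if (l + 1).Prime then Real.log ((l + 1 : ℕ) : ℝ) else 0 with hc
  have hc0 : ∀ l, 0 ≤ c l := fun l => by
    simp only [hc]; split_ifs
    · exact Real.log_natCast_nonneg _
    · exact le_rfl
  have hθ : ∀ n : ℕ, ∑ l ∈ Finset.range n, c l ≤ Real.log 4 * n := by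
    intro n
    refine le_trans (le_of_eq ?_) (Chebyshev.theta_le_log4_mul_x (x := n) (by positivity))
    rw [Chebyshev.theta_eq_sum_Icc, Nat.floor_natCast, Finset.sum_filter,
      ← Nat.range_succ_eq_Icc_zero, Finset.sum_range_succ']
    simp [hc]
  have hA := sum_mul_le_of_antitone hanti hpos hθ N
  have hanti' : ∀ l, ℓ l ≤ ℓ 0 := by
    intro l
    induction l with
    | zero => exact le_rfl
    | succ l ih => exact (hanti l).trans ih
  have hsplit : ∀ l ∈ Finset.range N, (if (l + 1).Prime then ℓ l else 0) ≤
      (if l + 1 ≤ ⌊√Y⌋₊ then ℓ 0 else 0) + 2 / Real.log Y * (ℓ l * c l) := by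
    intro l _
    have hnn : 0 ≤ 2 / Real.log Y * (ℓ l * c l) :=
      mul_nonneg (by positivity) (mul_nonneg (hpos l) (hc0 l))
    by_cases hp : (l + 1).Prime
    · rw [if_pos hp]
      by_cases hl : l + 1 ≤ ⌊√Y⌋₊
      · rw [if_pos hl]; linarith [hanti' l]
      · rw [if_neg hl, zero_add]
        have h1 : √Y < ((l + 1 : ℕ) : ℝ) := (Nat.floor_lt (Real.sqrt_nonneg _)).1 (not_le.1 hl)
        have h2 : Real.log Y / 2 ≤ c l := by
          simp only [hc, if_pos hp]
          rw [← Real.log_sqrt (by linarith)]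
          exact Real.log_le_log (Real.sqrt_pos.2 (by linarith)) h1.le
        calc ℓ l = 2 / Real.log Y * (ℓ l * (Real.log Y / 2)) := by field_simp
          _ ≤ _ := by
            refine mul_le_mul_of_nonneg_left ?_ (by positivity)
            exact mul_le_mul_of_nonneg_left h2 (hpos l)
    · rw [if_neg hp]
      have : 0 ≤ (if l + 1 ≤ ⌊√Y⌋₊ then ℓ 0 else 0) := by
        split_ifs
        · exact hpos 0
        · exact le_rfl
      linarith
  rw [Finset.sum_filter]
  refine (Finset.sum_le_sum hsplit).trans ?_
  rw [Finset.sum_add_distrib, ← Finset.mul_sum]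
  refine add_le_add ?_ ?_
  · rw [← Finset.sum_filter, Finset.sum_const, nsmul_eq_mul]
    refine mul_le_mul_of_nonneg_right ?_ (hpos 0)
    refine le_trans ?_ (Nat.floor_le (Real.sqrt_nonneg Y))
    norm_cast
    calc _ ≤ (Finset.range ⌊√Y⌋₊).card := Finset.card_le_card fun l hl => by
          simp only [Finset.mem_filter, Finset.mem_range] at hl ⊢; omega
      _ = _ := Finset.card_range _
  · calc 2 / Real.log Y * ∑ l ∈ Finset.range N, ℓ l * c l ≤
        2 / Real.log Y * (Real.log 4 * ∑ l ∈ Finset.range N, ℓ l) :=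
          mul_le_mul_of_nonneg_left hA (by positivity)
      _ = _ := by ring

lemma rpow_telescope {k : ℕ} (hk : 1 ≤ k) (N : ℕ) (hN : 1 ≤ N) :
    ((N + 1 : ℕ) : ℝ)⁻¹ * ((N + 1 : ℕ) : ℝ) ^ (-(1 / (k : ℝ))) ≤
      k * ((N : ℝ) ^ (-(1 / (k : ℝ))) - ((N + 1 : ℕ) : ℝ) ^ (-(1 / (k : ℝ)))) := by
  have hk1 : (1 : ℝ) ≤ k := by exact_mod_cast hk
  have hN1 : (1 : ℝ) ≤ N := by exact_mod_cast hN
  set s : ℝ := 1 / (k : ℝ) with hs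
  have hs0 : 0 < s := by positivity
  have hs1 : s ≤ 1 := by rw [hs, div_le_one (by linarith)]; exact hk1
  set j : ℝ := ((N + 1 : ℕ) : ℝ) with hj
  have hjN : j = N + 1 := by rw [hj]; push_cast; ring
  have hj0 : 0 < j := by rw [hjN]; linarith
  have hx : 0 < 1 - 1 / j := by
    rw [sub_pos, div_lt_one hj0]; linarith
  have hNj : (N : ℝ) = (1 - 1 / j) * j := by field_simp; linarith
  have hbern : (1 - 1 / j) ^ s ≤ 1 - s / j := by
    have := rpow_one_add_le_one_add_mul_self (s := -(1 / j)) (by linarith) hs0.le hs1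
    calc (1 - 1 / j) ^ s = (1 + -(1 / j)) ^ s := by rw [sub_eq_add_neg]
      _ ≤ 1 + s * -(1 / j) := this
      _ = _ := by ring
  have hpos : 0 < (1 - 1 / j) ^ s := Real.rpow_pos_of_pos hx _
  have hinv : 1 + s / j ≤ (1 - 1 / j) ^ (-s) := by
    rw [Real.rpow_neg hx.le, le_inv_comm₀ (by positivity) hpos]
    refine hbern.trans ?_
    rw [← one_div, le_div_iff₀ (by positivity)]
    nlinarith [sq_nonneg (s / j)]
  rw [hNj, Real.mul_rpow hx.le hj0.le]
  have hjs : 0 < j ^ (-s) := Real.rpow_pos_of_pos hj0 _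
  have hks : (k : ℝ) * s = 1 := by rw [hs]; field_simp
  calc j⁻¹ * j ^ (-s) = k * ((1 + s / j) * j ^ (-s) - j ^ (-s)) := by
        rw [show (k : ℝ) * ((1 + s / j) * j ^ (-s) - j ^ (-s)) = (k * s) * (j⁻¹ * j ^ (-s)) by ring,
          hks, one_mul]
    _ ≤ _ := by
        refine mul_le_mul_of_nonneg_left (sub_le_sub_right ?_ _) (by linarith)
        exact mul_le_mul_of_nonneg_right hinv hjs.le

lemma sum_rpow_le {k : ℕ} (hk : 1 ≤ k) (N : ℕ) :
    ∑ n ∈ Finset.range N, ((n + 1 : ℕ) : ℝ)⁻¹ * ((n + 1 : ℕ) : ℝ) ^ (-(1 / (k : ℝ))) ≤ k + 1 := by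
  have key : ∀ N : ℕ, ∑ n ∈ Finset.range (N + 1),
      ((n + 1 : ℕ) : ℝ)⁻¹ * ((n + 1 : ℕ) : ℝ) ^ (-(1 / (k : ℝ))) ≤
        k + 1 - k * ((N + 1 : ℕ) : ℝ) ^ (-(1 / (k : ℝ))) := by
    intro N
    induction N with
    | zero => simp
    | succ N ih =>
      rw [Finset.sum_range_succ]
      have := rpow_telescope hk (N + 1) (by omega)
      linarith
  rcases N with _ | N
  · simp; positivity
  · refine (key N).trans ?_
    have : 0 ≤ (k : ℝ) * ((N + 1 : ℕ) : ℝ) ^ (-(1 / (k : ℝ))) := by positivity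
    linarith

/-- Chebyshev-type upper bound for `Φ(e^{-1/X})`, `X = Y ^ k`. -/
lemma phiR_le {k : ℕ} (hk : 1 ≤ k) {Y : ℝ} (hY : 1 < Y) :
    PhiR k (Real.exp (-1 / Y ^ k)) ≤ √Y * Real.log (2 * Y ^ k) +
      2 * Real.log 4 * (Real.exp (k - 1) / k) * (k + 1) * (Y / Real.log Y) := by
  have hlogY : 0 < Real.log Y := Real.log_pos hY
  have hY0 : 0 < Y := by linarith
  set X := Y ^ k with hX
  have hX1 : 1 ≤ X := one_le_pow₀ hY.le
  have hX0 : 0 < X := by linarith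
  set ρ := Real.exp (-1 / X) with hρ
  have hρ0 : 0 < ρ := Real.exp_pos _
  have hneg : -1 / X < 0 := div_neg_of_neg_of_pos (by norm_num) hX0
  have hρ1 : ρ < 1 := Real.exp_lt_one_iff.2 hneg
  set s : ℝ := 1 / (k : ℝ) with hs
  have hk0 : (0 : ℝ) < k := by exact_mod_cast hk
  set K : ℝ := 2 * Real.log 4 / Real.log Y * (Real.exp (k - 1) / k * Y) with hK
  have hK0 : 0 ≤ K := by
    have : 0 ≤ Real.log 4 := Real.log_nonneg (by norm_num)
    positivity
  have hinner : ∀ j : ℕ, 1 ≤ j → ∀ F : Finset Nat.Primes,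
      ∑ p ∈ F, ρ ^ (j * (p : ℕ) ^ k) ≤ √Y * ρ ^ j + K * (j : ℝ) ^ (-s) := by
    intro j hj F
    have hj0 : (0 : ℝ) < j := by exact_mod_cast hj
    set Z : ℝ := Y * (j : ℝ) ^ (-s) with hZ
    have hZ0 : 0 < Z := by positivity
    have hZk : Z ^ k = X / j := by
      rw [hZ, mul_pow, ← Real.rpow_natCast ((j : ℝ) ^ (-s)), ← Real.rpow_mul hj0.le,
        show -s * k = -1 by rw [hs]; field_simp, Real.rpow_neg_one, ← hX, div_eq_mul_inv]
    set ℓ : ℕ → ℝ := fun l => ρ ^ (j * (l + 1) ^ k) with hℓ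
    have hℓe : ∀ l, ℓ l = Real.exp (-(((l + 1 : ℕ) : ℝ) / Z) ^ k) := by
      intro l
      simp only [hℓ]
      rw [hρ, ← Real.exp_nat_mul, div_pow, hZk]
      congr 1
      push_cast
      field_simp
    have hanti : ∀ l, ℓ (l + 1) ≤ ℓ l := fun l =>
      pow_le_pow_of_le_one hρ0.le hρ1.le
        (Nat.mul_le_mul_left _ (Nat.pow_le_pow_left (by omega) _))
    have hpos : ∀ l, 0 ≤ ℓ l := fun l => by positivity
    obtain ⟨N, hN⟩ : ∃ N : ℕ, ∀ p ∈ F, (p : ℕ) ≤ N :=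
      ⟨F.sup (fun p => (p : ℕ)), fun p hp => Finset.le_sup (f := fun p : Nat.Primes => (p : ℕ)) hp⟩
    have h1 : ∑ p ∈ F, ρ ^ (j * (p : ℕ) ^ k) ≤
        ∑ l ∈ (Finset.range N).filter (fun l => (l + 1).Prime), ℓ l := by
      have hinj : Set.InjOn (fun p : Nat.Primes => (p : ℕ) - 1) F := by
        intro p _ p' _ h
        have := p.2.one_lt
        have := p'.2.one_lt
        exact Subtype.ext (by simp only at h; omega)
      calc ∑ p ∈ F, ρ ^ (j * (p : ℕ) ^ k) = ∑ p ∈ F, ℓ ((p : ℕ) - 1) := by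
            refine Finset.sum_congr rfl fun p _ => ?_
            simp only [hℓ]
            rw [Nat.sub_add_cancel p.2.one_lt.le]
        _ = ∑ l ∈ F.image (fun p : Nat.Primes => (p : ℕ) - 1), ℓ l :=
            (Finset.sum_image hinj).symm
        _ ≤ _ := by
            refine Finset.sum_le_sum_of_subset_of_nonneg ?_ fun l _ _ => hpos l
            intro l hl
            obtain ⟨p, hp, rfl⟩ := Finset.mem_image.1 hl
            have hp1 := p.2.one_lt
            rw [Finset.mem_filter, Finset.mem_range, Nat.sub_add_cancel hp1.le]
            exact ⟨by have := hN p hp; omega, p.2⟩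
    refine h1.trans ((sum_prime_le hanti hpos hY N).trans ?_)
    refine add_le_add (le_of_eq (by simp [hℓ])) ?_
    have h2 : ∑ l ∈ Finset.range N, ℓ l ≤ Real.exp (k - 1) / k * Z := by
      rw [Finset.sum_congr rfl fun l _ => hℓe l]
      exact sum_exp_neg_pow_le hk hZ0 N
    have h4 : 0 ≤ Real.log 4 := Real.log_nonneg (by norm_num)
    calc _ ≤ 2 * Real.log 4 / Real.log Y * (Real.exp (k - 1) / k * Z) :=
          mul_le_mul_of_nonneg_left h2 (by positivity)
      _ = _ := by rw [hK, hZ]; ring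
  set g : ℕ → ℝ := fun j => ∑' p : Nat.Primes, ρ ^ (j * (p : ℕ) ^ k) / (j : ℝ) with hg
  have hPhi : PhiR k ρ = ∑' n : ℕ, g (n + 1) := by
    rw [← tsum_pnat_eq_tsum_succ]
    rfl
  have hg0 : ∀ j, 0 ≤ g j := fun j => tsum_nonneg fun p => by positivity
  set b1 : ℕ → ℝ := fun n => ρ ^ (n + 1) / ((n : ℝ) + 1) with hb1
  set b2 : ℕ → ℝ := fun n => ((n + 1 : ℕ) : ℝ)⁻¹ * ((n + 1 : ℕ) : ℝ) ^ (-s) with hb2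
  have hgb : ∀ n, g (n + 1) ≤ √Y * b1 n + K * b2 n := by
    intro n
    refine Real.tsum_le_of_sum_le (fun p => by positivity) fun F => ?_
    rw [← Finset.sum_div]
    calc _ ≤ (√Y * ρ ^ (n + 1) + K * ((n + 1 : ℕ) : ℝ) ^ (-s)) / ((n + 1 : ℕ) : ℝ) :=
          div_le_div_of_nonneg_right (hinner (n + 1) (by omega) F) (by positivity)
      _ = _ := by simp only [hb1, hb2]; push_cast; ring
  have hs1 : HasSum b1 (-Real.log (1 - ρ)) :=
    Real.hasSum_pow_div_log_of_abs_lt_one (by rw [abs_of_pos hρ0]; exact hρ1)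
  have hb2n : ∀ n, 0 ≤ b2 n := fun n => by positivity
  have hs2 : Summable b2 := summable_of_sum_range_le hb2n (sum_rpow_le hk)
  have ht2 : ∑' n, b2 n ≤ k + 1 := Real.tsum_le_of_sum_range_le hb2n (sum_rpow_le hk)
  have hsum : Summable fun n => √Y * b1 n + K * b2 n :=
    (hs1.summable.mul_left _).add (hs2.mul_left _)
  have hlog : -Real.log (1 - ρ) ≤ Real.log (2 * X) := by
    rw [← Real.log_inv]
    -- `e^{-x} ≤ 1/(1+x)`, so `1 - e^{-x} ≥ x/(1+x) ≥ x/2` at `x = 1/X ≤ 1`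
    have h1 : 1 / X + 1 ≤ ρ⁻¹ := by
      rw [hρ, ← Real.exp_neg, ← neg_div, neg_neg]; exact Real.add_one_le_exp _
    have h2 : (1 / X + 1) * ρ ≤ 1 := by
      calc (1 / X + 1) * ρ ≤ ρ⁻¹ * ρ := mul_le_mul_of_nonneg_right h1 hρ0.le
        _ = 1 := inv_mul_cancel₀ hρ0.ne'
    have h3 : (1 + X) * ρ ≤ X := by
      calc (1 + X) * ρ = X * ((1 / X + 1) * ρ) := by field_simp
        _ ≤ X * 1 := mul_le_mul_of_nonneg_left h2 hX0.le
        _ = X := mul_one _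
    have h4 : 0 < 1 - ρ := by linarith
    refine Real.log_le_log (inv_pos.2 h4) ?_
    rw [inv_le_comm₀ h4 (by linarith), ← one_div, div_le_iff₀ (by linarith)]
    nlinarith
  rw [hPhi]
  calc ∑' n : ℕ, g (n + 1) ≤ ∑' n, (√Y * b1 n + K * b2 n) :=
        (Summable.of_nonneg_of_le (fun n => hg0 _) hgb hsum).tsum_le_tsum hgb hsum
    _ = √Y * (-Real.log (1 - ρ)) + K * ∑' n, b2 n := by
        rw [(hs1.summable.mul_left _).tsum_add (hs2.mul_left _), tsum_mul_left, tsum_mul_left,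
          hs1.tsum_eq]
    _ ≤ √Y * Real.log (2 * X) + K * (k + 1) :=
        add_le_add (mul_le_mul_of_nonneg_left hlog (Real.sqrt_nonneg _))
          (mul_le_mul_of_nonneg_left ht2 hK0)
    _ = _ := by rw [hK]; ring

/-! ### Numerical and asymptotic inequalities -/

/-- The numerical inequality that makes the savings exceed `δ_k / 3` of the whole. -/
lemma deltak_mul_le {k : ℕ} (hk : 2 ≤ k) :
    deltak k * (Real.exp (k - 1) * ((k + 1) / k)) ≤
      4 / 5 * Real.exp (-1) * (1 / (12 * (badBound k : ℝ))) ^ 2 := by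
  have hB0 : (0 : ℝ) < badBound k := by
    have := (le_badBound hk).1
    exact_mod_cast (by omega : 0 < badBound k)
  have hk0 : (0 : ℝ) < k := by exact_mod_cast (by omega : 0 < k)
  have hCk : 0 < Ck k := by
    unfold Ck
    split_ifs
    · norm_num
    · exact Finset.prod_pos fun _ _ => hk0
  have hpi : Real.pi ^ 2 ≤ 10 := by nlinarith [Real.pi_lt_d4, Real.pi_pos]
  have hek : Real.exp (k - 1) = Real.exp (-1) * Real.exp 1 ^ k := by
    rw [← Real.exp_nat_mul, ← Real.exp_add]; congr 1; ring
  have hkk : ((k : ℝ) + 1) / k ≤ 3 / 2 := by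
    rw [div_le_iff₀ hk0]
    have : (2 : ℝ) ≤ k := by exact_mod_cast hk
    linarith
  have hkk0 : 0 ≤ ((k : ℝ) + 1) / k := by positivity
  have main : 10 * (Real.exp 1 ^ k * (3 / 2)) * (144 * (badBound k : ℝ) ^ 2) ≤
      4 / 5 * (2 ^ (2 * k + 3) * Ck k ^ (2 * k)) := by
    rcases eq_or_lt_of_le hk with rfl | hk3
    · have hb : badBound 2 = 1008 := by simp [badBound]
      have hc : Ck 2 = 128 := by simp [Ck]
      rw [hb, hc]
      have he : Real.exp 1 ^ 2 ≤ 7.4 := by nlinarith [Real.exp_one_lt_d9, Real.exp_pos 1]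
      norm_num at he ⊢
      linarith
    · have hb : (badBound k : ℝ) = (20 * (k : ℝ)) ^ (10 * k) := by
        rw [badBound, if_neg (by omega)]; push_cast; ring
      have hk3' : (3 : ℝ) ≤ k := by exact_mod_cast hk3
      have hc : (20 * (k : ℝ)) ^ 12 ≤ Ck k := by
        rw [Ck, if_neg (by omega), Finset.prod_const]
        have hcard : 48 ≤ ((Finset.range (k ^ 6 + 1)).filter Nat.Prime).card := by
          -- there are `48` primes below `224 ≤ 3 ^ 6`
          have h48 : ((Finset.range 224).filter Nat.Prime).card = 48 := by decide +kernel
          rw [← h48]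
          refine Finset.card_le_card (Finset.filter_subset_filter _ ?_)
          refine Finset.range_subset_range.2 ?_
          have : 3 ^ 6 ≤ k ^ 6 := Nat.pow_le_pow_left hk3 6
          omega
        calc (20 * (k : ℝ)) ^ 12 ≤ ((k : ℝ) ^ 4) ^ 12 := by
              refine pow_le_pow_left₀ (by positivity) ?_ 12
              have h3 : (3 : ℝ) ^ 3 ≤ (k : ℝ) ^ 3 := pow_le_pow_left₀ (by norm_num) hk3' 3
              calc 20 * (k : ℝ) ≤ (k : ℝ) ^ 3 * k :=
                    mul_le_mul_of_nonneg_right (by linarith) hk0.le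
                _ = _ := by ring
          _ = (k : ℝ) ^ 48 := by rw [← pow_mul]
          _ ≤ _ := pow_le_pow_right₀ (by linarith) hcard
      have h60 : (60 : ℝ) ≤ 20 * k := by linarith
      have he : Real.exp 1 ^ k ≤ (20 * (k : ℝ)) ^ k :=
        pow_le_pow_left₀ (Real.exp_pos 1).le (by linarith [Real.exp_one_lt_d9]) k
      have h3 : (2160 : ℝ) ≤ (20 * (k : ℝ)) ^ (3 * k) :=
        calc (2160 : ℝ) ≤ 60 ^ 3 := by norm_num
          _ ≤ (20 * (k : ℝ)) ^ 3 := pow_le_pow_left₀ (by norm_num) h60 3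
          _ ≤ _ := pow_le_pow_right₀ (by linarith) (by omega)
      have h8 : (8 : ℝ) ≤ 2 ^ (2 * k + 3) :=
        calc (8 : ℝ) = 2 ^ 3 := by norm_num
          _ ≤ _ := pow_le_pow_right₀ (by norm_num) (by omega)
      calc 10 * (Real.exp 1 ^ k * (3 / 2)) * (144 * (badBound k : ℝ) ^ 2)
          = 2160 * (Real.exp 1 ^ k * (badBound k : ℝ) ^ 2) := by ring
        _ ≤ (20 * (k : ℝ)) ^ (3 * k) * ((20 * (k : ℝ)) ^ k * (badBound k : ℝ) ^ 2) := by
            gcongr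
        _ = ((20 * (k : ℝ)) ^ 12) ^ (2 * k) := by
            rw [hb]
            simp only [← pow_mul, ← pow_add]
            congr 1
            ring
        _ ≤ Ck k ^ (2 * k) := pow_le_pow_left₀ (by positivity) hc _
        _ ≤ 4 / 5 * (2 ^ (2 * k + 3) * Ck k ^ (2 * k)) := by
            have : 0 < Ck k ^ (2 * k) := by positivity
            nlinarith
  have hD : 0 < (2 : ℝ) ^ (2 * k + 3) * Ck k ^ (2 * k) := by positivity
  rw [hek, deltak]
  have he0 := Real.exp_pos (-1)
  have h1 : Real.pi ^ 2 * (Real.exp 1 ^ k * (((k : ℝ) + 1) / k)) ≤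
      10 * (Real.exp 1 ^ k * (3 / 2)) := by gcongr
  calc Real.pi ^ 2 / (2 ^ (2 * k + 3) * Ck k ^ (2 * k)) *
        (Real.exp (-1) * Real.exp 1 ^ k * ((k + 1) / k))
      = Real.exp (-1) * ((Real.pi ^ 2 * (Real.exp 1 ^ k * (((k : ℝ) + 1) / k))) /
          (2 ^ (2 * k + 3) * Ck k ^ (2 * k))) := by ring
    _ ≤ Real.exp (-1) * (4 / 5 * (1 / (144 * (badBound k : ℝ) ^ 2))) := by
        refine mul_le_mul_of_nonneg_left ?_ he0.le
        rw [mul_one_div, div_le_div_iff₀ hD (by positivity)]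
        exact (mul_le_mul_of_nonneg_right h1 (by positivity)).trans main
    _ = _ := by ring

lemma one_sub_cos_ge {η θ : ℝ} (hη : 0 ≤ η) (h : ¬ Near η θ) :
    8 * η ^ 2 ≤ 1 - Real.cos (2 * Real.pi * θ) := by
  set m := round θ
  have h1 : |θ - m| ≤ 1 / 2 := abs_sub_round θ
  have h2 : η < |θ - m| := by
    by_contra hc
    exact h ⟨m, not_lt.1 hc⟩
  have hcos : Real.cos (2 * Real.pi * θ) = Real.cos (2 * Real.pi * (θ - m)) := by
    rw [← Real.cos_sub_int_mul_two_pi _ m]; congr 1; ring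
  have hle : |2 * Real.pi * (θ - m)| ≤ Real.pi := by
    rw [abs_mul, abs_of_pos Real.two_pi_pos]
    nlinarith [Real.pi_pos]
  have h3 := Real.cos_le_one_sub_mul_cos_sq hle
  rw [hcos]
  have h4 : η ^ 2 ≤ (θ - m) ^ 2 := by rw [← sq_abs (θ - m)]; gcongr
  have h5 : 2 / Real.pi ^ 2 * (2 * Real.pi * (θ - m)) ^ 2 = 8 * (θ - m) ^ 2 := by
    have := Real.pi_pos
    field_simp
    ring
  linarith

/-- Powers of `log Y` times `Y ^ t`, `t < 1`, are negligible against `Y / log Y`. -/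
lemma eventually_log_mul_rpow_le (s c : ℝ) {t ε : ℝ} (ht : t < 1) (hε : 0 < ε) :
    ∀ᶠ Y : ℝ in atTop, c * Real.log Y ^ s * Y ^ t ≤ ε * (Y / Real.log Y) := by
  have h := (isLittleO_log_rpow_rpow_atTop (s := 1 - t) (s + 1) (by linarith)).def
    (c := ε / (|c| + 1)) (by positivity)
  filter_upwards [h, eventually_gt_atTop 1] with Y hY hY1
  have hY0 : 0 < Y := by linarith
  have hl : 0 < Real.log Y := Real.log_pos hY1
  rw [Real.norm_of_nonneg (by positivity), Real.norm_of_nonneg (by positivity),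
    Real.rpow_add_one hl.ne', div_mul_eq_mul_div, le_div_iff₀ (by positivity)] at hY
  have hYY : Y ^ (1 - t) * Y ^ t = Y := by
    rw [← Real.rpow_add hY0, sub_add_cancel, Real.rpow_one]
  have hYt : 0 < Y ^ t := by positivity
  have hc : c ≤ |c| + 1 := by linarith [le_abs_self c]
  rw [← mul_div_assoc, le_div_iff₀ hl]
  have hls : 0 < Real.log Y ^ s * Real.log Y := by positivity
  calc c * Real.log Y ^ s * Y ^ t * Real.log Y
      = (c * (Real.log Y ^ s * Real.log Y)) * Y ^ t := by ring
    _ ≤ ((|c| + 1) * (Real.log Y ^ s * Real.log Y)) * Y ^ t := by gcongr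
    _ = (Real.log Y ^ s * Real.log Y * (|c| + 1)) * Y ^ t := by ring
    _ ≤ (ε * Y ^ (1 - t)) * Y ^ t := by gcongr
    _ = ε * Y := by rw [mul_assoc, hYY]

/-! ### The bound at a fixed height -/

/-- The primes up to `Y` at which `α p ^ k` stays away from the integers. -/
lemma exists_far_primes {k q R : ℕ} (hk : 2 ≤ k) (hq : 1 < q) (hR : 2 ≤ R) {a : ℤ}
    (ha : IsCoprime a (q : ℤ)) {α β Y : ℝ} (hY : 1 < Y) (hβ : β = α - (a : ℝ) / q)
    (hlogR : 449 / 1000 * Real.log Y ≤ Real.log R)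
    (hpi : 69 / 100 * (Y / Real.log Y) ≤ (Nat.primeCounting ⌊Y⌋₊ : ℝ))
    (herr : 2 * ((10000 * badBound k * (|β| * Y ^ k) + 2) * q * (R : ℝ) ^ 2) + R + q ≤
      1 / 200 * (Y / Real.log Y)) :
    ∃ F : Finset Nat.Primes, 1 / 10 * (Y / Real.log Y) ≤ (F.card : ℝ) ∧
      ∀ p ∈ F, ((p : ℕ) : ℝ) ≤ Y ∧ ¬ Near (1 / (12 * (badBound k : ℝ))) (α * (p : ℕ) ^ k) := by
  classical
  have hlog : 0 < Real.log Y := Real.log_pos hY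
  set η := 1 / (12 * (badBound k : ℝ)) with hη
  set G := (Finset.range (⌊Y⌋₊ + 1)).filter (fun p : ℕ => ¬ Near η (α * (p : ℝ) ^ k)) with hG
  refine ⟨G.subtype Nat.Prime, ?_, ?_⟩
  · have hsub : (G.subtype Nat.Prime).card = (G.filter Nat.Prime).card := Finset.card_subtype _ _
    refine le_of_le_of_eq ?_ (congrArg Nat.cast hsub.symm)
    have hcover : (Finset.range (⌊Y⌋₊ + 1)).filter Nat.Prime ⊆
        ((G.filter Nat.Prime ∪ nearPrimes k q R a β Y η) ∪ Finset.Icc 1 R) ∪ q.divisors := by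
      intro p hp
      obtain ⟨hpY, hpp⟩ := Finset.mem_filter.1 hp
      rw [Finset.mem_range] at hpY
      by_cases hpq : p ∣ q
      · exact Finset.mem_union_right _ (Nat.mem_divisors.2 ⟨hpq, by omega⟩)
      refine Finset.mem_union_left _ ?_
      by_cases hpR : p ≤ R
      · exact Finset.mem_union_right _ (Finset.mem_Icc.2 ⟨hpp.one_lt.le, hpR⟩)
      refine Finset.mem_union_left _ ?_
      have hθ : (a : ℝ) * (p : ℝ) ^ k / q + β * (p : ℝ) ^ k = α * (p : ℝ) ^ k := by rw [hβ]; ring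
      by_cases hn : Near η (α * (p : ℝ) ^ k)
      · refine Finset.mem_union_right _ (mem_nearPrimes.2 ?_)
        rw [hθ]
        exact ⟨⟨hpp.one_lt.le, by omega⟩, hpp, by omega, hpq, hn⟩
      · refine Finset.mem_union_left _ (Finset.mem_filter.2 ⟨Finset.mem_filter.2 ⟨?_, hn⟩, hpp⟩)
        exact Finset.mem_range.2 hpY
    have hcard : Nat.primeCounting ⌊Y⌋₊ ≤ (G.filter Nat.Prime).card +
        (nearPrimes k q R a β Y η).card + R + q := by
      have h1 := Finset.card_le_card hcover
      have h2 : ((Finset.range (⌊Y⌋₊ + 1)).filter Nat.Prime).card = Nat.primeCounting ⌊Y⌋₊ :=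
        (Nat.count_eq_card_filter_range _ _).symm
      have h3 := Finset.card_union_le
        ((G.filter Nat.Prime ∪ nearPrimes k q R a β Y η) ∪ Finset.Icc 1 R) q.divisors
      have h4 := Finset.card_union_le
        (G.filter Nat.Prime ∪ nearPrimes k q R a β Y η) (Finset.Icc 1 R)
      have h5 := Finset.card_union_le (G.filter Nat.Prime) (nearPrimes k q R a β Y η)
      have h6 := Nat.card_divisors_le_self q
      rw [Nat.card_Icc] at h4
      omega
    have hcard' : (Nat.primeCounting ⌊Y⌋₊ : ℝ) ≤ (G.filter Nat.Prime).card +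
        (nearPrimes k q R a β Y η).card + R + q := by exact_mod_cast hcard
    have hnear := card_nearPrimes_le (β := β) hk hq hR ha hY.le
    rw [← hη] at hnear
    have hmain : 13 / 50 * Y / Real.log R ≤ 29 / 50 * (Y / Real.log Y) := by
      have hR0 : 0 < Real.log R := by nlinarith
      rw [← mul_div_assoc, div_le_div_iff₀ hR0 hlog]
      nlinarith
    have hYl : 0 < Y / Real.log Y := by positivity
    linarith
  · intro p hp
    have hp' : (p : ℕ) ∈ G := Finset.mem_subtype.1 hp
    obtain ⟨h1, h2⟩ := Finset.mem_filter.1 hp'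
    refine ⟨?_, h2⟩
    rw [Finset.mem_range] at h1
    exact (Nat.cast_le.2 (Nat.lt_succ_iff.1 h1)).trans (Nat.floor_le (by linarith))

lemma exists_primes_le {Y : ℝ} (hY : 0 ≤ Y) :
    ∃ F : Finset Nat.Primes, F.card = Nat.primeCounting ⌊Y⌋₊ ∧ ∀ p ∈ F, ((p : ℕ) : ℝ) ≤ Y := by
  refine ⟨(Finset.range (⌊Y⌋₊ + 1)).subtype Nat.Prime, ?_, fun p hp => ?_⟩
  · exact (Finset.card_subtype _ _).trans (Nat.count_eq_card_filter_range _ _).symm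
  · have hp' := Finset.mem_range.1 (Finset.mem_subtype.1 hp)
    exact (Nat.cast_le.2 (Nat.lt_succ_iff.1 hp')).trans (Nat.floor_le hY)

lemma exp_neg_one_le_pow {k p : ℕ} {Y : ℝ} (hY : 1 < Y) (hp : (p : ℝ) ≤ Y) :
    Real.exp (-1) ≤ Real.exp (-1 / Y ^ k) ^ (p ^ k) := by
  rw [← Real.exp_nat_mul, Real.exp_le_exp]
  have hX : 0 < Y ^ k := by positivity
  have : (p : ℝ) ^ k ≤ Y ^ k := pow_le_pow_left₀ (by positivity) hp k
  push_cast
  rw [← mul_div_assoc, le_div_iff₀ hX]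
  linarith

lemma phiR_nonneg {k : ℕ} {ρ : ℝ} (hρ : 0 ≤ ρ) : 0 ≤ PhiR k ρ :=
  tsum_nonneg fun _ => tsum_nonneg fun _ => by positivity

/-- The bound at a fixed `X = Y ^ k`, once the error terms are known to be small. -/
lemma abs_re_phiC_le {k q R : ℕ} (hk : 2 ≤ k) (hq : 1 < q) (hR : 2 ≤ R) {a : ℤ}
    (ha : IsCoprime a (q : ℤ)) {α β Y : ℝ} (hY : 1 < Y) (hβ : β = α - (a : ℝ) / q)
    (hlogR : 449 / 1000 * Real.log Y ≤ Real.log R)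
    (hpi : 69 / 100 * (Y / Real.log Y) ≤ (Nat.primeCounting ⌊Y⌋₊ : ℝ))
    (herr : 2 * ((10000 * badBound k * (|β| * Y ^ k) + 2) * q * (R : ℝ) ^ 2) + R + q ≤
      1 / 200 * (Y / Real.log Y))
    (hphi : √Y * Real.log (2 * Y ^ k) ≤ 1 / 5 * (Y / Real.log Y)) :
    |(PhiC k ((Real.exp (-1 / Y ^ k) : ℝ) * eTheta α)).re| ≤
      (1 - deltak k / 3) * PhiR k (Real.exp (-1 / Y ^ k)) := by
  have hk1 : 1 ≤ k := by omega
  have hlog : 0 < Real.log Y := Real.log_pos hY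
  have hX : 0 < Y ^ k := by positivity
  set ρ := Real.exp (-1 / Y ^ k) with hρ
  have hρ0 : 0 ≤ ρ := (Real.exp_pos _).le
  have hρ1 : ρ < 1 := Real.exp_lt_one_iff.2 (div_neg_of_neg_of_pos (by norm_num) hX)
  set W := Y / Real.log Y with hW
  have hW0 : 0 < W := by positivity
  set M := Real.exp ((k : ℝ) - 1) * (((k : ℝ) + 1) / k) with hM
  set η := 1 / (12 * (badBound k : ℝ)) with hη
  have hk0 : (2 : ℝ) ≤ k := by exact_mod_cast hk
  have hM1 : 1 ≤ M := by
    have h1 : 1 ≤ Real.exp ((k : ℝ) - 1) := Real.one_le_exp (by linarith)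
    have h2 : 1 ≤ ((k : ℝ) + 1) / k := by rw [le_div_iff₀ (by linarith)]; linarith
    nlinarith
  have hΦ : PhiR k ρ ≤ 3 * M * W := by
    have h := phiR_le hk1 hY
    rw [← hρ, ← hW] at h
    have h4 : Real.log 4 = 2 * Real.log 2 := by
      rw [show (4 : ℝ) = 2 ^ 2 by norm_num, Real.log_pow]; norm_num
    have h5 : 2 * Real.log 4 * (Real.exp (k - 1) / k) * (k + 1) * W =
        4 * Real.log 2 * (M * W) := by rw [h4, hM]; ring
    rw [h5] at h
    have h6 : W ≤ M * W := by nlinarith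
    have h7 : 4 * Real.log 2 ≤ 2.8 := by linarith [Real.log_two_lt_d9]
    have h8 : 4 * Real.log 2 * (M * W) ≤ 2.8 * (M * W) :=
      mul_le_mul_of_nonneg_right h7 (by linarith)
    linarith
  have hδ : deltak k * M ≤ 4 / 5 * Real.exp (-1) * η ^ 2 := deltak_mul_le hk
  have hCk : 0 ≤ Ck k := by
    unfold Ck
    split_ifs
    · norm_num
    · exact Finset.prod_nonneg fun _ _ => by positivity
  have hδ0 : 0 ≤ deltak k := by unfold deltak; positivity
  have hloss : deltak k / 3 * PhiR k ρ ≤ 4 / 5 * Real.exp (-1) * η ^ 2 * W := by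
    calc deltak k / 3 * PhiR k ρ ≤ deltak k / 3 * (3 * M * W) :=
          mul_le_mul_of_nonneg_left hΦ (by positivity)
      _ = deltak k * M * W := by ring
      _ ≤ _ := mul_le_mul_of_nonneg_right hδ hW0.le
  have hη0 : 0 ≤ η := by positivity
  have hη1 : η ≤ 1 / 12096 := by
    have : (1008 : ℝ) ≤ badBound k := by exact_mod_cast (le_badBound hk).1
    rw [hη]
    exact one_div_le_one_div_of_le (by norm_num) (by linarith)
  have he0 := Real.exp_pos (-1)
  rw [abs_le']
  constructor
  · obtain ⟨F, hF, hFp⟩ := exists_far_primes hk hq hR ha hY hβ hlogR hpi herr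
    have h1 := re_phiC_le hk1 hρ0 hρ1 α F
    have h2 : F.card • (Real.exp (-1) * (8 * η ^ 2)) ≤ ∑ p ∈ F, ρ ^ ((p : ℕ) ^ k) *
        (1 - Real.cos (2 * Real.pi * (α * (p : ℕ) ^ k))) := by
      refine Finset.card_nsmul_le_sum _ _ _ fun p hp => ?_
      obtain ⟨hpY, hfar⟩ := hFp p hp
      exact mul_le_mul (exp_neg_one_le_pow hY hpY) (one_sub_cos_ge hη0 hfar) (by positivity)
        (by positivity)
    have h3 : 1 / 10 * W * (Real.exp (-1) * (8 * η ^ 2)) ≤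
        F.card • (Real.exp (-1) * (8 * η ^ 2)) := by
      rw [nsmul_eq_mul]
      exact mul_le_mul_of_nonneg_right hF (by positivity)
    linarith
  · obtain ⟨F, hF, hFp⟩ := exists_primes_le (by linarith : 0 ≤ Y)
    have h1 := neg_re_phiC_le hk1 hρ0 hρ1 α F
    have hcard : 69 / 100 * W ≤ (F.card : ℝ) := by rw [hF]; exact hpi
    have h2 : F.card • (Real.exp (-1) ^ 2 / 4) ≤ ∑ p ∈ F, (ρ ^ ((p : ℕ) ^ k)) ^ 2 / 4 := by
      refine Finset.card_nsmul_le_sum _ _ _ fun p hp => ?_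
      have := exp_neg_one_le_pow (k := k) hY (hFp p hp)
      gcongr
    have h3 : 69 / 100 * W * (Real.exp (-1) ^ 2 / 4) ≤ F.card • (Real.exp (-1) ^ 2 / 4) := by
      rw [nsmul_eq_mul]
      exact mul_le_mul_of_nonneg_right hcard (by positivity)
    have he : 1 / 3 ≤ Real.exp (-1) := by
      rw [Real.exp_neg, ← one_div]
      exact one_div_le_one_div_of_le (Real.exp_pos 1) (by linarith [Real.exp_one_lt_d9])
    have h4 : 4 / 5 * Real.exp (-1) * η ^ 2 * W ≤ 69 / 100 * W * (Real.exp (-1) ^ 2 / 4) := by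
      have h5 : 4 / 5 * η ^ 2 ≤ 69 / 100 * (Real.exp (-1) / 4) := by nlinarith
      nlinarith [mul_le_mul_of_nonneg_left h5 (mul_nonneg he0.le hW0.le)]
    have h6 := hloss.trans (h4.trans (h3.trans h2))
    rw [one_sub_mul]
    exact h1.trans (sub_le_sub_left h6 _)

lemma eventually_primeCounting_ge :
    ∀ᶠ Y : ℝ in atTop, 69 / 100 * (Y / Real.log Y) ≤ (Nat.primeCounting ⌊Y⌋₊ : ℝ) := by
  have hlog : ∀ᶠ Y : ℝ in atTop, ‖Real.log Y‖ ≤ 1 / 1000 * ‖Y‖ :=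
    Real.isLittleO_log_id_atTop.def (by norm_num)
  filter_upwards [hlog, eventually_gt_atTop 1000] with Y h hY
  have hl : 0 < Real.log Y := Real.log_pos (by linarith)
  rw [Real.norm_of_nonneg hl.le, Real.norm_of_nonneg (by linarith)] at h
  refine le_trans ?_ (Chebyshev.pi_ge' (by linarith))
  rw [← mul_div_assoc]
  refine div_le_div_of_nonneg_right ?_ hl.le
  have h2 : Real.log (Y + 2) ≤ Real.log Y + Real.log 2 := by
    rw [← Real.log_mul (by linarith) (by norm_num)]
    exact Real.log_le_log (by linarith) (by linarith)
  nlinarith [Real.log_two_gt_d9, Real.log_two_lt_d9]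

lemma eventually_floor_rpow :
    ∀ᶠ Y : ℝ in atTop, 2 ≤ ⌊Y ^ (9 / 20 : ℝ)⌋₊ ∧
      449 / 1000 * Real.log Y ≤ Real.log (⌊Y ^ (9 / 20 : ℝ)⌋₊ : ℝ) := by
  have h1 : Tendsto (fun Y : ℝ => Y ^ (9 / 20 : ℝ)) atTop atTop :=
    tendsto_rpow_atTop (by norm_num)
  filter_upwards [h1.eventually_ge_atTop 2, Real.tendsto_log_atTop.eventually_ge_atTop 1000,
    eventually_gt_atTop 1] with Y h2 h3 hY
  have hfl : 2 ≤ ⌊Y ^ (9 / 20 : ℝ)⌋₊ := Nat.le_floor (by exact_mod_cast h2)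
  refine ⟨hfl, ?_⟩
  have hlt := Nat.lt_floor_add_one (Y ^ (9 / 20 : ℝ))
  have hfl' : (2 : ℝ) ≤ (⌊Y ^ (9 / 20 : ℝ)⌋₊ : ℝ) := by exact_mod_cast hfl
  have h4 : Y ^ (9 / 20 : ℝ) / 2 ≤ (⌊Y ^ (9 / 20 : ℝ)⌋₊ : ℝ) := by linarith
  have h5 := Real.log_le_log (by linarith) h4
  rw [Real.log_div (by linarith) (by norm_num), Real.log_rpow (by linarith)] at h5
  linarith [Real.log_two_lt_d9]

end MajorArc

/-! ### Conclusion -/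

/-- Lemma 5.3 (non-principal major arcs): for `1 < q ≤ (log X)^A`, `β = α - a/q`,
`|β| ≤ q⁻¹ X⁻¹ (log X)^A`, `ρ = e^{-1/X}`,
`|Re Φ(ρ e(α))| ≤ (1 - δ_k/3) Φ(ρ) (1 + O(log log X / log X))`. -/
theorem stmt13 (k : ℕ) (hk : 2 ≤ k) (A : ℝ) (hA : 0 < A) :
    ∃ C X₀ : ℝ, 0 < C ∧
      ∀ X > X₀, ∀ (α β : ℝ) (q : ℕ) (a : ℤ),
        Int.gcd a q = 1 → 1 < q → (q : ℝ) ≤ Real.log X ^ A →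
        β = α - (a : ℝ) / q → |β| ≤ (q : ℝ)⁻¹ * X⁻¹ * Real.log X ^ A →
        |(PhiC k ((Real.exp (-1 / X) : ℂ) * eTheta α)).re| ≤
          (1 - deltak k / 3) * PhiR k (Real.exp (-1 / X)) *
            (1 + C * (Real.log (Real.log X) / Real.log X)) := by
  have hk0 : (0 : ℝ) < k := by exact_mod_cast (by omega : 0 < k)
  set B := MajorArc.badBound k with hB
  have ev : ∀ᶠ Y : ℝ in atTop, 1 < Y ∧ 1 ≤ Real.log Y ∧
      (2 ≤ ⌊Y ^ (9 / 20 : ℝ)⌋₊ ∧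
        449 / 1000 * Real.log Y ≤ Real.log (⌊Y ^ (9 / 20 : ℝ)⌋₊ : ℝ)) ∧
      69 / 100 * (Y / Real.log Y) ≤ (Nat.primeCounting ⌊Y⌋₊ : ℝ) ∧
      ((20000 * B + 4) * (k : ℝ) ^ A) * Real.log Y ^ A * Y ^ (9 / 10 : ℝ) ≤
        1 / 600 * (Y / Real.log Y) ∧
      1 * Real.log Y ^ (0 : ℝ) * Y ^ (9 / 20 : ℝ) ≤ 1 / 600 * (Y / Real.log Y) ∧
      (k : ℝ) ^ A * Real.log Y ^ A * Y ^ (0 : ℝ) ≤ 1 / 600 * (Y / Real.log Y) ∧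
      ((k : ℝ) + 1) * Real.log Y ^ (1 : ℝ) * Y ^ (1 / 2 : ℝ) ≤ 1 / 5 * (Y / Real.log Y) := by
    filter_upwards [eventually_gt_atTop 1, Real.tendsto_log_atTop.eventually_ge_atTop 1,
      MajorArc.eventually_floor_rpow, MajorArc.eventually_primeCounting_ge,
      MajorArc.eventually_log_mul_rpow_le A ((20000 * B + 4) * (k : ℝ) ^ A)
        (t := 9 / 10) (ε := 1 / 600) (by norm_num) (by norm_num),
      MajorArc.eventually_log_mul_rpow_le 0 1
        (t := 9 / 20) (ε := 1 / 600) (by norm_num) (by norm_num),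
      MajorArc.eventually_log_mul_rpow_le A ((k : ℝ) ^ A)
        (t := 0) (ε := 1 / 600) (by norm_num) (by norm_num),
      MajorArc.eventually_log_mul_rpow_le 1 ((k : ℝ) + 1)
        (t := 1 / 2) (ε := 1 / 5) (by norm_num) (by norm_num)]
      with Y h1 h2 h3 h4 h5 h6 h7 h8
    exact ⟨h1, h2, h3, h4, h5, h6, h7, h8⟩
  have evX := (tendsto_rpow_atTop (y := 1 / (k : ℝ)) (by positivity)).eventually ev
  obtain ⟨X₀, hX₀⟩ := eventually_atTop.1 (evX.and (eventually_gt_atTop (1 : ℝ)))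
  refine ⟨1, X₀, one_pos, fun X hX α β q a hgcd hq hqle hβ hβle => ?_⟩
  obtain ⟨⟨hY1, hlog1, ⟨hR2, hlogR⟩, hpi, e1, e2, e3, e4⟩, hX1⟩ := hX₀ X hX.le
  set Y := X ^ (1 / (k : ℝ)) with hYdef
  have hYk : Y ^ k = X := by
    rw [hYdef, ← Real.rpow_natCast, ← Real.rpow_mul (by linarith), one_div_mul_cancel hk0.ne',
      Real.rpow_one]
  have hY0 : 0 < Y := by linarith
  have hlogX : Real.log X = k * Real.log Y := by rw [← hYk, Real.log_pow]
  have hlogXA : Real.log X ^ A = (k : ℝ) ^ A * Real.log Y ^ A := by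
    rw [hlogX, Real.mul_rpow hk0.le (by linarith)]
  set R := ⌊Y ^ (9 / 20 : ℝ)⌋₊ with hR
  have hq0 : (0 : ℝ) < q := by exact_mod_cast (by omega : 0 < q)
  have hRle : (R : ℝ) ≤ Y ^ (9 / 20 : ℝ) := Nat.floor_le (by positivity)
  have hR2le : (R : ℝ) ^ 2 ≤ Y ^ (9 / 10 : ℝ) := by
    calc (R : ℝ) ^ 2 ≤ (Y ^ (9 / 20 : ℝ)) ^ 2 := pow_le_pow_left₀ (by positivity) hRle 2
      _ = Y ^ (9 / 10 : ℝ) := by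
        rw [← Real.rpow_natCast, ← Real.rpow_mul hY0.le]; norm_num
  have hβq : |β| * Y ^ k * q ≤ Real.log X ^ A := by
    rw [hYk]
    calc |β| * X * q ≤ ((q : ℝ)⁻¹ * X⁻¹ * Real.log X ^ A) * X * q := by gcongr
      _ = Real.log X ^ A := by field_simp
  have hL0 : 0 ≤ Real.log X ^ A := hq0.le.trans hqle
  have herr : 2 * ((10000 * B * (|β| * Y ^ k) + 2) * q * (R : ℝ) ^ 2) + R + q ≤
      1 / 200 * (Y / Real.log Y) := by
    have h1 : 2 * ((10000 * B * (|β| * Y ^ k) + 2) * q * (R : ℝ) ^ 2) ≤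
        ((20000 * B + 4) * (k : ℝ) ^ A) * Real.log Y ^ A * Y ^ (9 / 10 : ℝ) := by
      calc 2 * ((10000 * B * (|β| * Y ^ k) + 2) * q * (R : ℝ) ^ 2)
          = (20000 * B * (|β| * Y ^ k * q) + 4 * q) * (R : ℝ) ^ 2 := by ring
        _ ≤ (20000 * B * (Real.log X ^ A) + 4 * Real.log X ^ A) * Y ^ (9 / 10 : ℝ) := by gcongr
        _ = _ := by rw [hlogXA]; ring
    rw [Real.rpow_zero, mul_one, one_mul] at e2
    rw [Real.rpow_zero, mul_one, ← hlogXA] at e3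
    linarith
  have hphi : √Y * Real.log (2 * Y ^ k) ≤ 1 / 5 * (Y / Real.log Y) := by
    refine le_trans ?_ e4
    rw [Real.rpow_one, ← Real.sqrt_eq_rpow, mul_comm,
      Real.log_mul (by norm_num) (by positivity), Real.log_pow]
    refine mul_le_mul_of_nonneg_right ?_ (Real.sqrt_nonneg _)
    linarith [Real.log_two_lt_d9]
  have key := MajorArc.abs_re_phiC_le hk hq hR2 (Int.isCoprime_iff_gcd_eq_one.2 hgcd) hY1 hβ
    hlogR hpi herr hphi
  rw [hYk] at key
  have hLL : 0 ≤ Real.log (Real.log X) / Real.log X := by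
    have h1 : 1 ≤ Real.log X := by
      rw [hlogX]
      have : (2 : ℝ) ≤ k := by exact_mod_cast hk
      nlinarith
    exact div_nonneg (Real.log_nonneg h1) (by linarith)
  -- the right-hand side of `key` is nonnegative, being at least an absolute value
  exact key.trans (le_mul_of_one_le_right ((abs_nonneg _).trans key) (by linarith))
end

section
/- Fix an integer k ≥ 1. Let p be a prime, let τ be the exponent with p^τ exactly dividing k, and set γ = τ + 2 if p = 2 and τ > 0, and γ = τ + 1 otherwise. Then for every integer ℓ > γ and every integer a not divisible by p, S_k*(p^ℓ, a) = 0. -/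
/-!
Write `q = p ^ ℓ` and let `ψ` be the standard additive character of `ZMod q`, so that the sum is
`∑ ψ (a * u ^ k)` over the units `u` of `ZMod q`. Put `v = 1 + p ^ (ℓ - τ - 1)`. Lifting the
exponent shows that `ε = v ^ k - 1` is divisible by exactly `p ^ (ℓ - 1)`; the assumption `γ < ℓ`
is what makes this legitimate, since it forces `p ∣ v - 1`, and `4 ∣ v - 1` if `p = 2` divides `k`.
Hence in `ZMod q` we have `ε ≠ 0`, `p * ε = 0` and `ε ^ 2 = 0`, so `(v ^ k) ^ j = 1 + j * ε`.

Replacing `u` by `u * v ^ j` does not change the sum. Averaging over `0 ≤ j < p` multiplies the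
term of `u` by the geometric sum `∑ ζ ^ j` with `ζ = ψ (a * u ^ k * ε)`. This `ζ` is a `p`-th root
of unity, and it is not `1` because `a` and `u` are units and `ψ` is injective; so every term
vanishes.
-/

open Filter

/-- `S_k*(q,a) = ∑_{1 ≤ ℓ ≤ q, (ℓ,q)=1} e(a ℓ^k / q)`. -/
noncomputable def Sstar (k : ℕ) (q : ℕ) (a : ℤ) : ℂ :=
  ∑ ℓ ∈ (Finset.Icc 1 q).filter (fun ℓ => Nat.gcd ℓ q = 1),
    Complex.exp (2 * Real.pi * Complex.I * ((a : ℂ) * (ℓ : ℂ) ^ k / (q : ℂ)))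

lemma Sstar_eq_sum_units (k q : ℕ) [NeZero q] (hq : 1 < q) (a : ℤ) :
    Sstar k q a = ∑ u : (ZMod q)ˣ, ZMod.stdAddChar ((a : ZMod q) * (u : ZMod q) ^ k) := by
  unfold Sstar
  symm
  refine Finset.sum_bij (fun u _ => (u : ZMod q).val) ?_ ?_ ?_ ?_
  · intro u _
    have hc := ZMod.val_coe_unit_coprime u
    rw [Finset.mem_filter, Finset.mem_Icc]
    refine ⟨⟨Nat.one_le_iff_ne_zero.2 fun h => ?_, (ZMod.val_lt _).le⟩, hc⟩
    rw [h, Nat.coprime_zero_left] at hc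
    omega
  · intro u _ w _ h
    exact Units.ext (ZMod.val_injective q h)
  · intro n hn
    rw [Finset.mem_filter, Finset.mem_Icc] at hn
    obtain ⟨⟨h1, h2⟩, h3⟩ := hn
    -- the endpoint `n = q` is not coprime to `q`, because `1 < q`
    have hlt : n < q := lt_of_le_of_ne h2 fun h => by
      rw [h, Nat.gcd_self] at h3
      omega
    exact ⟨ZMod.unitOfCoprime n h3, Finset.mem_univ _, by
      rw [ZMod.coe_unitOfCoprime, ZMod.val_cast_of_lt hlt]⟩
  · intro u _
    have h : (a : ZMod q) * (u : ZMod q) ^ k =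
        ((a * ((u : ZMod q).val : ℤ) ^ k : ℤ) : ZMod q) := by
      push_cast
      rw [ZMod.natCast_zmod_val]
    rw [h, ZMod.stdAddChar_coe]
    push_cast
    congr 1
    ring

lemma one_add_pow_of_sq_eq_zero {R : Type*} [CommRing R] (ε : R) (h : ε ^ 2 = 0) (j : ℕ) :
    (1 + ε) ^ j = 1 + j * ε := by
  induction j with
  | zero => simp
  | succ j ih =>
    rw [pow_succ, ih]
    push_cast
    linear_combination (j : R) * h

/-- The averaging argument: a unit `v` whose `k`-th power is `1 + ε`, with `ε` nonzero,
square-zero and killed by `p`, forces the exponential sum to vanish. -/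
lemma sum_units_eq_zero (k p q : ℕ) [NeZero q] (hp : p ≠ 0) (a v : (ZMod q)ˣ) (ε : ZMod q)
    (hv : (v : ZMod q) ^ k = 1 + ε) (h0 : ε ≠ 0) (h2 : ε ^ 2 = 0) (hpε : (p : ZMod q) * ε = 0) :
    ∑ u : (ZMod q)ˣ, ZMod.stdAddChar ((a : ZMod q) * (u : ZMod q) ^ k) = 0 := by
  set S := ∑ u : (ZMod q)ˣ, ZMod.stdAddChar ((a : ZMod q) * (u : ZMod q) ^ k) with hS
  have hshift : ∀ j : ℕ, S = ∑ u : (ZMod q)ˣ, ZMod.stdAddChar ((a : ZMod q) * (u : ZMod q) ^ k) *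
      ZMod.stdAddChar ((a : ZMod q) * (u : ZMod q) ^ k * ε) ^ j := by
    intro j
    rw [hS, ← Equiv.sum_comp (Equiv.mulRight (v ^ j))]
    refine Finset.sum_congr rfl fun u _ => ?_
    rw [← AddChar.map_nsmul_eq_pow, ← AddChar.map_add_eq_mul]
    congr 1
    have : ((v : ZMod q) ^ j) ^ k = 1 + j * ε := by
      rw [← pow_mul, mul_comm, pow_mul, hv, one_add_pow_of_sq_eq_zero ε h2]
    simp only [Equiv.coe_mulRight, Units.val_mul, Units.val_pow_eq_pow_val, mul_pow, this,
      nsmul_eq_mul]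
    ring
  have hpS : (p : ℂ) * S = 0 := by
    calc (p : ℂ) * S = ∑ _j ∈ Finset.range p, S := by simp
      _ = ∑ j ∈ Finset.range p, ∑ u : (ZMod q)ˣ,
            ZMod.stdAddChar ((a : ZMod q) * (u : ZMod q) ^ k) *
            ZMod.stdAddChar ((a : ZMod q) * (u : ZMod q) ^ k * ε) ^ j :=
          Finset.sum_congr rfl fun j _ => hshift j
      _ = 0 := by
          rw [Finset.sum_comm]
          refine Finset.sum_eq_zero fun u _ => ?_
          rw [← Finset.mul_sum]
          have hne : ZMod.stdAddChar ((a : ZMod q) * (u : ZMod q) ^ k * ε) ≠ 1 := by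
            intro h
            rw [← AddChar.map_zero_eq_one (ZMod.stdAddChar (N := q))] at h
            have h' := ZMod.injective_stdAddChar h
            rw [← Units.val_pow_eq_pow_val, ← Units.val_mul, Units.mul_right_eq_zero] at h'
            exact h0 h'
          have hp1 : ZMod.stdAddChar ((a : ZMod q) * (u : ZMod q) ^ k * ε) ^ p = 1 := by
            rw [← AddChar.map_nsmul_eq_pow, nsmul_eq_mul, mul_left_comm, hpε, mul_zero,
              AddChar.map_zero_eq_one]
          rw [geom_sum_eq hne, hp1, sub_self, zero_div, mul_zero]
  exact (mul_eq_zero.1 hpS).resolve_left (Nat.cast_ne_zero.2 hp)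

/-- Lifting the exponent, uniformly in `p`: for `p = 2` with `2 ∣ k` the base must be `1` mod `4`,
which is what `2 ≤ s` provides. -/
lemma emultiplicity_one_add_pow (k p τ s : ℕ) (hp : p.Prime) (hτ1 : p ^ τ ∣ k)
    (hτ2 : ¬ p ^ (τ + 1) ∣ k) (hs : 1 ≤ s) (hs2 : p = 2 → 0 < τ → 2 ≤ s) :
    emultiplicity (p : ℤ) ((1 + (p : ℤ) ^ s) ^ k - 1) = ((s + τ : ℕ) : ℕ∞) := by
  have hpI : Prime (p : ℤ) := Nat.prime_iff_prime_int.1 hp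
  have hk : emultiplicity p k = (τ : ℕ∞) := emultiplicity_eq_coe.2 ⟨hτ1, hτ2⟩
  have hps : (p : ℤ) ∣ (p : ℤ) ^ s := dvd_pow_self _ (by omega)
  have hsub : (1 + (p : ℤ) ^ s) - 1 = (p : ℤ) ^ s := by ring
  have hxy : (p : ℤ) ∣ (1 + (p : ℤ) ^ s) - 1 := by rwa [hsub]
  have hx : ¬ (p : ℤ) ∣ 1 + (p : ℤ) ^ s := fun h =>
    hpI.not_isUnit (isUnit_of_dvd_one ((dvd_add_left hps).1 h))
  have hes : emultiplicity (p : ℤ) ((1 + (p : ℤ) ^ s) - 1) = (s : ℕ∞) := by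
    rw [hsub, emultiplicity_pow_self hpI.ne_zero hpI.not_isUnit]
  rcases hp.eq_two_or_odd' with h2 | hodd
  · subst h2
    rcases Nat.eq_zero_or_pos τ with h0 | hpos
    · subst h0
      have hnk : ¬ ((2 : ℕ) : ℤ) ∣ (k : ℤ) := by
        rw [Int.natCast_dvd_natCast]
        simpa using hτ2
      have := emultiplicity_pow_sub_pow_of_prime hpI hxy hx hnk
      rw [one_pow, hes] at this
      simpa using this
    · have h4 : (4 : ℤ) ∣ (1 + ((2 : ℕ) : ℤ) ^ s) - 1 := by
        rw [hsub]
        exact pow_dvd_pow (2 : ℤ) (hs2 rfl hpos)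
      have := Int.two_pow_sub_pow' k h4 hx
      rw [one_pow] at this
      have hk' : emultiplicity (2 : ℤ) (k : ℤ) = (τ : ℕ∞) := by
        rw [← hk]
        exact Int.natCast_emultiplicity 2 k
      rw [hk'] at this
      rw [Nat.cast_add, ← hes]
      exact this
  · have := Int.emultiplicity_pow_sub_pow hp hodd hxy hx k
    rw [one_pow, hes, hk] at this
    rw [this, Nat.cast_add]

/-- Lemma 8.2: with `p^τ ∥ k` and `γ = τ+2` if `p = 2, τ > 0`, else `γ = τ+1`,
`S_k*(p^ℓ, a) = 0` whenever `ℓ > γ` and `p ∤ a`. -/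
theorem stmt15 (k : ℕ) (hk : 1 ≤ k) (p : ℕ) (hp : p.Prime) (τ : ℕ)
    (hτ1 : p ^ τ ∣ k) (hτ2 : ¬ p ^ (τ + 1) ∣ k) :
    ∀ ℓ : ℕ, (if p = 2 ∧ 0 < τ then τ + 2 else τ + 1) < ℓ →
      ∀ a : ℤ, ¬ (p : ℤ) ∣ a → Sstar k (p ^ ℓ) a = 0 := by
  intro ℓ hℓ a ha
  have hℓ1 : τ + 1 < ℓ := by split_ifs at hℓ <;> omega
  have hℓ2 : p = 2 → 0 < τ → τ + 2 < ℓ := fun h h' => by rwa [if_pos ⟨h, h'⟩] at hℓ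
  have hpI : Prime (p : ℤ) := Nat.prime_iff_prime_int.1 hp
  obtain ⟨s, rfl⟩ : ∃ s, ℓ = s + τ + 1 := ⟨ℓ - τ - 1, by omega⟩
  have : NeZero (p ^ (s + τ + 1)) := ⟨pow_ne_zero _ hp.ne_zero⟩
  have hunit : ∀ b : ℤ, ¬ (p : ℤ) ∣ b → IsUnit (b : ZMod (p ^ (s + τ + 1))) := by
    intro b hb
    rw [ZMod.coe_int_isUnit_iff_isCoprime]
    push_cast
    exact ((Prime.coprime_iff_not_dvd hpI).2 hb).pow_left
  have hx : ¬ (p : ℤ) ∣ 1 + (p : ℤ) ^ s := fun h =>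
    hpI.not_isUnit (isUnit_of_dvd_one ((dvd_add_left (dvd_pow_self _ (by omega))).1 h))
  obtain ⟨hdvd, hndvd⟩ := emultiplicity_eq_coe.1
    (emultiplicity_one_add_pow k p τ s hp hτ1 hτ2 (by omega) fun h h' => by
      have := hℓ2 h h'
      omega)
  set E : ℤ := (1 + (p : ℤ) ^ s) ^ k - 1 with hE
  have hzero : ∀ b : ℤ, (p : ℤ) ^ (s + τ + 1) ∣ b ↔ (b : ZMod (p ^ (s + τ + 1))) = 0 := by
    intro b
    rw [ZMod.intCast_zmod_eq_zero_iff_dvd]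
    push_cast
    rfl
  rw [Sstar_eq_sum_units k _ (Nat.one_lt_pow (by omega) hp.one_lt)]
  obtain ⟨a', ha'⟩ := hunit a ha
  obtain ⟨v, hv⟩ := hunit _ hx
  rw [← ha']
  refine sum_units_eq_zero k p _ hp.ne_zero a' v (E : ZMod (p ^ (s + τ + 1))) ?_ ?_ ?_ ?_
  · rw [hv, hE]
    push_cast
    ring
  · exact fun h => hndvd ((hzero E).2 h)
  · have := (hzero (E ^ 2)).1 (by
      -- `2 * (s + τ) ≥ s + τ + 1` because `s ≥ 1`
      have h := pow_dvd_pow_of_dvd hdvd 2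
      rw [← pow_mul] at h
      exact (pow_dvd_pow _ (by omega)).trans h)
    exact_mod_cast this
  · have := (hzero (p * E)).1 (by
      rw [pow_succ']
      exact mul_dvd_mul_left _ hdvd)
    exact_mod_cast this
end
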